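/- arXiv:0710.5350 — 3 statements merged into one kernel-verified Lean document; each statement's English description precedes it below -/
import Mathlib

section
/- Every two-qubit density matrix ρ is SLOCC equivalent to at least one of the following: (1) a Bell-diagonal state ρ_BD(λ) with ordered weight vector λ; (2) a separable two-qubit density matrix; or (3) the state ρ_ND(b) = (1/4)·[[2,0,0,0],[0,1,2b,0],[0,2b,1,0],[0,0,0,0]] (written in the product basis |00⟩,|01⟩,|10⟩,|11⟩) for some real b with 0 < b ≤ 1/2. -/
open Matrix Complex
open scoped Kronecker ComplexOrder

noncomputable section
namespace Paper

abbrev Q2 := Fin 2 × Fin 2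
abbrev M4 := Matrix Q2 Q2 ℂ
abbrev M16 := Matrix (Q2 × Q2) (Q2 × Q2) ℂ

/-- `1/√2` as a complex number. -/
def invSqrt2 : ℂ := ((Real.sqrt 2)⁻¹ : ℝ)

/-- The four Bell states `|Φ₁⟩,…,|Φ₄⟩` as vectors in `ℂ²⊗ℂ²`
(product basis indexed by `Fin 2 × Fin 2`). -/
def bell : Fin 4 → Q2 → ℂ :=
  ![fun p => !![invSqrt2, 0; 0, invSqrt2] p.1 p.2,
    fun p => !![invSqrt2, 0; 0, -invSqrt2] p.1 p.2,
    fun p => !![0, invSqrt2; invSqrt2, 0] p.1 p.2,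
    fun p => !![0, invSqrt2; -invSqrt2, 0] p.1 p.2]

/-- The Bell projectors `Π_i = |Φ_i⟩⟨Φ_i|`. -/
def BellProj (i : Fin 4) : M4 := vecMulVec (bell i) (star (bell i))

/-- The Pauli matrices `σ_x, σ_y, σ_z`. -/
def pauli : Fin 3 → Matrix (Fin 2) (Fin 2) ℂ :=
  ![!![0, 1; 1, 0], !![0, -I; I, 0], !![1, 0; 0, -1]]

/-- Reindexing `((a',b'),(a'',b'')) ↦ ((a',a''),(b',b''))`. -/
def swapMid : (Q2 × Q2) ≃ (Q2 × Q2) where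
  toFun p := ((p.1.1, p.2.1), (p.1.2, p.2.2))
  invFun p := ((p.1.1, p.2.1), (p.1.2, p.2.2))
  left_inv _ := rfl
  right_inv _ := rfl

/-- The rank-one matrix `x x†`. -/
def pureMat {d : Type*} (x : d → ℂ) : Matrix d d ℂ := vecMulVec x (star x)

/-- Separability of a 16×16 four-qubit matrix (qubit order A',B',A'',B'')
across the partition A = (A',A''), B = (B',B''). -/
def SepAB (ρ : M16) : Prop :=
  ∃ (n : ℕ) (x y : Fin n → Q2 → ℂ),
    (Matrix.reindex swapMid swapMid ρ) = ∑ k, (pureMat (x k)) ⊗ₖ (pureMat (y k))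


/-- `ρ` can be transformed to `ρ'` by SLOCC: `ρ' = c·Σ_k (A_k⊗B_k) ρ (A_k⊗B_k)†`
for finitely many local Kraus pairs and some `c > 0`. -/
def SLOCCto (ρ ρ' : M4) : Prop :=
  ∃ (N : ℕ) (A B : Fin N → Matrix (Fin 2) (Fin 2) ℂ) (c : ℝ),
    0 < c ∧ ρ' = (c : ℂ) • ∑ k, (A k ⊗ₖ B k) * ρ * (A k ⊗ₖ B k)ᴴ

/-- `ρ` and `ρ'` are SLOCC equivalent. -/
def SLOCCequiv (ρ ρ' : M4) : Prop := SLOCCto ρ ρ' ∧ SLOCCto ρ' ρ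

/-- The Bell-diagonal state with weight vector `l`. -/
def rhoBD (l : Fin 4 → ℝ) : M4 := ∑ i, (l i : ℂ) • BellProj i

/-- `l` is a weight vector: nonnegative entries summing to `1`. -/
def IsWeight (l : Fin 4 → ℝ) : Prop := (∀ i, 0 ≤ l i) ∧ ∑ i, l i = 1

/-- `l` is ordered: `λ₁ ≥ λ₂ ≥ λ₃ ≥ λ₄`. -/
def IsOrdered (l : Fin 4 → ℝ) : Prop := l 1 ≤ l 0 ∧ l 2 ≤ l 1 ∧ l 3 ≤ l 2

/-- A two-qubit density matrix. -/
def IsDensity (ρ : M4) : Prop := ρ.PosSemidef ∧ ρ.trace = 1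

/-- Separability of a two-qubit matrix. -/
def Sep2 (ρ : M4) : Prop :=
  ∃ (N : ℕ) (x y : Fin N → Fin 2 → ℂ),
    ρ = ∑ k, (pureMat (x k)) ⊗ₖ (pureMat (y k))
/-- Identification of the product basis `|00⟩,|01⟩,|10⟩,|11⟩` with `Fin 4`. -/
def idx4 : Q2 → Fin 4 := fun p => ⟨2 * p.1.val + p.2.val, by omega⟩

/-- The non-Bell-diagonal normal form
`ρ_ND(b) = (1/4)·[[2,0,0,0],[0,1,2b,0],[0,2b,1,0],[0,0,0,0]]`. -/
def rhoND (b : ℝ) : M4 := fun p q =>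
  (1 / 4 : ℂ) *
    !![2, 0, 0, 0; 0, 1, 2 * (b : ℂ), 0; 0, 2 * (b : ℂ), 1, 0; 0, 0, 0, 0]
      (idx4 p) (idx4 q)

/-- The Bell-diagonal state
`ρ'_ND(b) = (1/2)·[[0,0,0,0],[0,1,−2b,0],[0,−2b,1,0],[0,0,0,0]]`. -/
def rhoND' (b : ℝ) : M4 := fun p q =>
  (1 / 2 : ℂ) *
    !![0, 0, 0, 0; 0, 1, -2 * (b : ℂ), 0; 0, -2 * (b : ℂ), 1, 0; 0, 0, 0, 0]
      (idx4 p) (idx4 q)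

/-!
Invertible product filters `A ⊗ B` preserve the SLOCC class, so it suffices to bring `ρ` to a
normal form by such filters.

If no nonzero product filter annihilates `ρ`, then `tr (A ⊗ B) ρ (A ⊗ B)†` attains a positive
minimum over `|det A| = |det B| = 1`. At a minimiser both marginals are maximally mixed: were one
of them a multiple of `1/2 + h` with `h ≠ 0` traceless, the filter `1 - h`, rescaled to determinant
one, would lower the trace. In the magic basis such a Hermitian matrix is real symmetric, hence has
an orthonormal eigenbasis of unit quaternions, and left and right multiplication by quaternions
(local filters) move this basis onto the Bell basis.

If some nonzero product filter annihilates `ρ`, a local change of basis makes the `|11⟩` population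
vanish. Orthogonal projection of Gram vectors and diagonal filters then leave only the weights of
`|00⟩, |01⟩, |10⟩` and one coherence `d` between `|01⟩` and `|10⟩`: the state is separable if
`d = 0`, Bell diagonal up to a local bit flip if the weight of `|00⟩` is zero, and `ρ_ND(b)`
otherwise.
-/

section LocalFilter

variable {m n : Type*} [Fintype m] [Fintype n]

/-- The unnormalised post-measurement state when the local Kraus operators `A` and `B` act on the
two parts of `ρ`: one term of the sum defining `SLOCCto`. -/
def localFilter (A : Matrix m m ℂ) (B : Matrix n n ℂ) (ρ : Matrix (m × n) (m × n) ℂ) :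
    Matrix (m × n) (m × n) ℂ :=
  (A ⊗ₖ B) * ρ * (A ⊗ₖ B)ᴴ

lemma localFilter_apply (A : Matrix m m ℂ) (B : Matrix n n ℂ) (ρ : Matrix (m × n) (m × n) ℂ)
    (p q : m × n) :
    localFilter A B ρ p q =
      ∑ s, ∑ r, A p.1 r.1 * B p.2 r.2 * ρ r s * star (A q.1 s.1 * B q.2 s.2) := by
  simp only [localFilter, Matrix.mul_apply, kroneckerMap_apply, conjTranspose_apply,
    Finset.sum_mul]

lemma localFilter_localFilter (A A' : Matrix m m ℂ) (B B' : Matrix n n ℂ)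
    (ρ : Matrix (m × n) (m × n) ℂ) :
    localFilter A B (localFilter A' B' ρ) = localFilter (A * A') (B * B') ρ := by
  simp only [localFilter, mul_kronecker_mul, conjTranspose_mul, Matrix.mul_assoc]

lemma localFilter_one_one [DecidableEq m] [DecidableEq n] (ρ : Matrix (m × n) (m × n) ℂ) :
    localFilter 1 1 ρ = ρ := by
  simp [localFilter]

lemma localFilter_smul_smul (x y : ℝ) (A : Matrix m m ℂ) (B : Matrix n n ℂ)
    (ρ : Matrix (m × n) (m × n) ℂ) :
    localFilter (x • A) (y • B) ρ = (x ^ 2 * y ^ 2) • localFilter A B ρ := by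
  simp only [localFilter, smul_kronecker, kronecker_smul, conjTranspose_smul, Matrix.smul_mul,
    Matrix.mul_smul, smul_smul, star_trivial]
  congr 1
  ring

lemma localFilter_smul (A : Matrix m m ℂ) (B : Matrix n n ℂ) (c : ℝ)
    (ρ : Matrix (m × n) (m × n) ℂ) : localFilter A B (c • ρ) = c • localFilter A B ρ := by
  simp [localFilter]

lemma localFilter_sum {ι : Type*} (s : Finset ι) (A : Matrix m m ℂ) (B : Matrix n n ℂ)
    (ρ : ι → Matrix (m × n) (m × n) ℂ) :
    localFilter A B (∑ i ∈ s, ρ i) = ∑ i ∈ s, localFilter A B (ρ i) := by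
  simp [localFilter, Matrix.mul_sum, Matrix.sum_mul]

lemma localFilter_pureMat (A : Matrix m m ℂ) (B : Matrix n n ℂ) (x : m × n → ℂ) :
    localFilter A B (pureMat x) = pureMat ((A ⊗ₖ B) *ᵥ x) := by
  rw [localFilter, pureMat, mul_vecMulVec, vecMulVec_mul, ← star_mulVec, pureMat]

lemma posSemidef_localFilter (A : Matrix m m ℂ) (B : Matrix n n ℂ)
    {ρ : Matrix (m × n) (m × n) ℂ} (hρ : ρ.PosSemidef) : (localFilter A B ρ).PosSemidef :=
  hρ.mul_mul_conjTranspose_same _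

lemma continuous_localFilter (ρ : Matrix (m × n) (m × n) ℂ) :
    Continuous fun z : Matrix m m ℂ × Matrix n n ℂ ↦ localFilter z.1 z.2 ρ := by
  refine continuous_matrix fun p q ↦ ?_
  simp only [localFilter_apply]
  fun_prop

variable [DecidableEq m] [DecidableEq n]

/-- Two bipartite matrices are locally equivalent if an invertible product filter maps one to the
other. The Kraus sum of an SLOCC transformation is reduced to one term, and its positive factor is
absorbed into the filter. -/
def LocalEquiv (ρ σ : Matrix (m × n) (m × n) ℂ) : Prop :=
  ∃ (A : GL m ℂ) (B : GL n ℂ), σ = localFilter A.1 B.1 ρ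

variable {ρ σ τ : Matrix (m × n) (m × n) ℂ}

lemma localEquiv_localFilter {A : Matrix m m ℂ} {B : Matrix n n ℂ} (hA : A.det ≠ 0)
    (hB : B.det ≠ 0) (ρ : Matrix (m × n) (m × n) ℂ) : LocalEquiv ρ (localFilter A B ρ) :=
  ⟨.mkOfDetNeZero A hA, .mkOfDetNeZero B hB, rfl⟩

namespace LocalEquiv

protected lemma symm (h : LocalEquiv ρ σ) : LocalEquiv σ ρ := by
  obtain ⟨A, B, rfl⟩ := h
  refine ⟨A⁻¹, B⁻¹, ?_⟩
  rw [localFilter_localFilter, Units.inv_mul, Units.inv_mul, localFilter_one_one]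

protected lemma trans (h : LocalEquiv ρ σ) (h' : LocalEquiv σ τ) : LocalEquiv ρ τ := by
  obtain ⟨A, B, rfl⟩ := h
  obtain ⟨A', B', rfl⟩ := h'
  exact ⟨A' * A, B' * B, localFilter_localFilter ..⟩

lemma posSemidef (h : LocalEquiv ρ σ) (hρ : ρ.PosSemidef) : σ.PosSemidef := by
  obtain ⟨A, B, rfl⟩ := h
  exact posSemidef_localFilter A.1 B.1 hρ

lemma ne_zero (h : LocalEquiv ρ σ) (hρ : ρ ≠ 0) : σ ≠ 0 := by
  rintro rfl
  obtain ⟨A, B, rfl⟩ := h.symm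
  exact hρ (by simp [localFilter])

lemma smul_right (h : LocalEquiv ρ σ) {c : ℝ} (hc : 0 < c) : LocalEquiv ρ (c • σ) := by
  have hdet : (√c • (1 : Matrix m m ℂ)).det ≠ 0 := by
    rw [det_smul_of_tower, det_one]
    exact smul_ne_zero (pow_ne_zero _ (Real.sqrt_ne_zero'.2 hc)) one_ne_zero
  have hscale : localFilter (√c • 1) ((1 : ℝ) • 1) σ = c • σ := by
    rw [localFilter_smul_smul, localFilter_one_one, Real.sq_sqrt hc.le, one_pow, mul_one]
  exact hscale ▸ h.trans (localEquiv_localFilter hdet (by simp) σ)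

lemma sloccTo {ρ σ : M4} (h : LocalEquiv ρ σ) : SLOCCto ρ σ := by
  obtain ⟨A, B, rfl⟩ := h
  exact ⟨1, fun _ ↦ A.1, fun _ ↦ B.1, 1, one_pos, by simp [localFilter]⟩

lemma sloccEquiv {ρ σ : M4} (h : LocalEquiv ρ σ) : SLOCCequiv ρ σ :=
  ⟨h.sloccTo, h.symm.sloccTo⟩

end LocalEquiv

lemma trace_eq_ofReal_re {k : Type*} [Fintype k] {ρ : Matrix k k ℂ} (hρ : ρ.PosSemidef) :
    ρ.trace = (ρ.trace.re : ℂ) :=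
  Complex.eq_re_of_ofReal_le (r := 0) (by simpa using hρ.trace_nonneg)

lemma trace_re_pos {k : Type*} [Fintype k] {ρ : Matrix k k ℂ} (hρ : ρ.PosSemidef)
    (hne : ρ ≠ 0) : 0 < ρ.trace.re := by
  have htr : ρ.trace ≠ 0 := hρ.trace_eq_zero_iff.not.2 hne
  rw [trace_eq_ofReal_re hρ, Complex.ofReal_ne_zero] at htr
  exact htr.symm.lt_of_le (Complex.nonneg_iff.1 hρ.trace_nonneg).1

lemma trace_re_inv_smul {k : Type*} [Fintype k] {ρ : Matrix k k ℂ} (hρ : ρ.PosSemidef)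
    (hne : ρ ≠ 0) : (ρ.trace.re⁻¹ • ρ).trace = 1 := by
  rw [trace_smul, trace_eq_ofReal_re hρ, Complex.ofReal_re, Complex.real_smul,
    ← Complex.ofReal_mul, inv_mul_cancel₀ (trace_re_pos hρ hne).ne', Complex.ofReal_one]

lemma IsDensity.ne_zero {ρ : M4} (hρ : IsDensity ρ) : ρ ≠ 0 := by
  rintro rfl
  simpa using hρ.2

lemma IsDensity.exists_smul_of_localEquiv {ρ σ : M4} (hρ : IsDensity ρ) (h : LocalEquiv ρ σ) :
    ∃ c : ℝ, 0 < c ∧ IsDensity (c • σ) ∧ SLOCCequiv ρ (c • σ) := by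
  have hσ := h.posSemidef hρ.1
  have hne := h.ne_zero hρ.ne_zero
  have hc := inv_pos.2 (trace_re_pos hσ hne)
  have hequiv := h.smul_right hc
  exact ⟨σ.trace.re⁻¹, hc, ⟨hequiv.posSemidef hρ.1, trace_re_inv_smul hσ hne⟩, hequiv.sloccEquiv⟩

end LocalFilter

section Extremal

lemma exists_forall_mul_le_mul_of_bihomogeneous {E F : Type*}
    [NormedAddCommGroup E] [NormedSpace ℝ E] [ProperSpace E] [Nontrivial E]
    [NormedAddCommGroup F] [NormedSpace ℝ F] [ProperSpace F] [Nontrivial F]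
    {f g : E × F → ℝ} {k l : ℕ} (hf : Continuous f) (hg : Continuous g)
    (hf_smul : ∀ (x y : ℝ) a b, f (x • a, y • b) = x ^ k * y ^ l * f (a, b))
    (hg_smul : ∀ (x y : ℝ) a b, g (x • a, y • b) = x ^ k * y ^ l * g (a, b))
    (hf_pos : ∀ a b, a ≠ 0 → b ≠ 0 → 0 < f (a, b)) :
    ∃ a₀ b₀, a₀ ≠ 0 ∧ b₀ ≠ 0 ∧
      ∀ a b, a ≠ 0 → b ≠ 0 → g (a, b) * f (a₀, b₀) ≤ g (a₀, b₀) * f (a, b) := by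
  let K : Set (E × F) := Metric.sphere 0 1 ×ˢ Metric.sphere 0 1
  have hK_pos : ∀ z ∈ K, 0 < f z := fun z hz ↦
    hf_pos _ _ (ne_zero_of_mem_unit_sphere ⟨z.1, hz.1⟩) (ne_zero_of_mem_unit_sphere ⟨z.2, hz.2⟩)
  have hK_compact : IsCompact K := (isCompact_sphere 0 1).prod (isCompact_sphere 0 1)
  have hK_nonempty : K.Nonempty :=
    (NormedSpace.sphere_nonempty.2 zero_le_one).prod (NormedSpace.sphere_nonempty.2 zero_le_one)
  obtain ⟨z₀, hz₀, hmax⟩ := hK_compact.exists_isMaxOn hK_nonempty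
    (hg.continuousOn.div hf.continuousOn fun z hz ↦ (hK_pos z hz).ne')
  refine ⟨z₀.1, z₀.2, ne_zero_of_mem_unit_sphere ⟨z₀.1, hz₀.1⟩,
    ne_zero_of_mem_unit_sphere ⟨z₀.2, hz₀.2⟩, fun a b ha hb ↦ ?_⟩
  have hz : (‖a‖⁻¹ • a, ‖b‖⁻¹ • b) ∈ K := by simp [K, norm_smul, ha, hb]
  have hle := (div_le_div_iff₀ (hK_pos _ hz) (hK_pos _ hz₀)).1 (hmax hz)
  rw [hf_smul, hg_smul, mul_assoc, mul_left_comm (g z₀)] at hle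
  exact le_of_mul_le_mul_left hle (by positivity)

/-- The algebra of single-qubit operators. -/
abbrev M2 := Matrix (Fin 2) (Fin 2) ℂ

/-- The normal form of a two-qubit state under local filtering: filtering by operators of
determinant one, which is all that `A ⊗ B` can do up to scale, never brings its trace below one. -/
def IsExtremal (ρ : M4) : Prop :=
  ∀ A B : M2, ‖A.det‖ * ‖B.det‖ ≤ (localFilter A B ρ).trace.re

variable {ρ : M4}

open scoped Matrix.Norms.Elementwise in
lemma exists_forall_norm_det_mul_trace_le (hρ : ρ.PosSemidef)
    (hne : ∀ A B : M2, A ≠ 0 → B ≠ 0 → localFilter A B ρ ≠ 0) :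
    ∃ A₀ B₀ : M2, A₀.det ≠ 0 ∧ B₀.det ≠ 0 ∧
      ∀ A B : M2, ‖A.det‖ * ‖B.det‖ * (localFilter A₀ B₀ ρ).trace.re ≤
        ‖A₀.det‖ * ‖B₀.det‖ * (localFilter A B ρ).trace.re := by
  have htrace_pos : ∀ A B : M2, A ≠ 0 → B ≠ 0 →
      0 < (localFilter A B ρ).trace.re := fun A B hA hB ↦
    trace_re_pos (posSemidef_localFilter A B hρ) (hne A B hA hB)
  obtain ⟨A₀, B₀, hA₀, hB₀, hmax⟩ := exists_forall_mul_le_mul_of_bihomogeneous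
    (k := 2) (l := 2) (f := fun z ↦ (localFilter z.1 z.2 ρ).trace.re)
    (g := fun z ↦ ‖z.1.det‖ * ‖z.2.det‖)
    (Complex.continuous_re.comp (continuous_localFilter ρ).matrix_trace)
    (by fun_prop)
    (fun x y A B ↦ by rw [localFilter_smul_smul, trace_smul, Complex.smul_re, smul_eq_mul])
    (fun x y A B ↦ by
      simp only [det_smul_of_tower, Fintype.card_fin, norm_smul, norm_pow, Real.norm_eq_abs, sq_abs]
      ring)
    htrace_pos
  have hdet : 0 < ‖A₀.det‖ * ‖B₀.det‖ := by
    have hle := hmax 1 1 one_ne_zero one_ne_zero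
    simp only [det_one, norm_one, one_mul] at hle
    exact pos_of_mul_pos_left ((htrace_pos A₀ B₀ hA₀ hB₀).trans_le hle)
      (htrace_pos 1 1 one_ne_zero one_ne_zero).le
  refine ⟨A₀, B₀, fun h ↦ by simp [h] at hdet, fun h ↦ by simp [h] at hdet, fun A B ↦ ?_⟩
  rcases eq_or_ne A 0 with rfl | hA
  · simp [localFilter]
  rcases eq_or_ne B 0 with rfl | hB
  · simp [localFilter]
  exact hmax A B hA hB

lemma exists_localEquiv_isExtremal (hρ : ρ.PosSemidef)
    (hne : ∀ A B : M2, A ≠ 0 → B ≠ 0 → localFilter A B ρ ≠ 0) :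
    ∃ σ, LocalEquiv ρ σ ∧ σ.trace = 1 ∧ IsExtremal σ := by
  obtain ⟨A₀, B₀, hA₀, hB₀, hmax⟩ := exists_forall_norm_det_mul_trace_le hρ hne
  have hσ := posSemidef_localFilter A₀ B₀ hρ
  have hequiv := localEquiv_localFilter hA₀ hB₀ ρ
  have hσ_ne : localFilter A₀ B₀ ρ ≠ 0 :=
    hne A₀ B₀ (by rintro rfl; simp at hA₀) (by rintro rfl; simp at hB₀)
  have htr := trace_re_pos hσ hσ_ne
  refine ⟨_, hequiv.smul_right (inv_pos.2 htr), trace_re_inv_smul hσ hσ_ne, fun A B ↦ ?_⟩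
  have hle := hmax (A * A₀) (B * B₀)
  rw [localFilter_smul, localFilter_localFilter, trace_smul, Complex.smul_re, smul_eq_mul,
    inv_mul_eq_div, le_div_iff₀ htr]
  refine le_of_mul_le_mul_left ?_ (mul_pos (norm_pos_iff.2 hA₀) (norm_pos_iff.2 hB₀))
  simp only [det_mul, norm_mul] at hle
  linarith

end Extremal

section Marginals

lemma eq_half_of_norm_det_le_trace {M : M2} (hM : M.IsHermitian)
    (htr : M.trace = 1)
    (hdet : ∀ A : M2, ‖A.det‖ ≤ (A * M * Aᴴ).trace.re) :
    M = (1 / 2 : ℂ) • 1 := by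
  obtain ⟨x, hx⟩ : ∃ x : ℝ, M 0 0 = 1 / 2 + x := by
    refine ⟨(M 0 0).re - 1 / 2, ?_⟩
    conv_lhs => rw [← hM.coe_re_apply_self 0]
    simp
  have hx' : M 1 1 = 1 / 2 - x := by
    rw [trace_fin_two] at htr
    linear_combination htr - hx
  obtain ⟨z, hz⟩ : ∃ z, M 0 1 = z := ⟨_, rfl⟩
  have hz' : M 1 0 = star z := hz ▸ (hM.apply 1 0).symm
  -- `M = 1/2 + h` with `h * h = (x ^ 2 + normSq z) • 1`, and `A = 1 - h`.
  have hle : x ^ 2 + normSq z ≤ 0 := by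
    let A : M2 := !![1 - x, -z; -star z, 1 + x]
    have hA_det : A.det = ((1 - (x ^ 2 + normSq z) : ℝ) : ℂ) := by
      simp only [A, det_fin_two_of, star_def]
      push_cast [← Complex.mul_conj]
      ring
    have hA_trace : (A * M * Aᴴ).trace = ((1 - 3 * (x ^ 2 + normSq z) : ℝ) : ℂ) := by
      simp only [A, trace_fin_two, Matrix.mul_apply, Fin.sum_univ_two, conjTranspose_apply,
        of_apply, cons_val_zero, cons_val_one, cons_val', cons_val_fin_one, star_def, map_neg,
        map_sub, map_add, map_one, Complex.conj_conj, Complex.conj_ofReal, hx, hx', hz, hz']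
      push_cast [← Complex.mul_conj]
      ring
    have hA := (Complex.re_le_norm _).trans (hdet A)
    rw [hA_det, hA_trace, Complex.ofReal_re, Complex.ofReal_re] at hA
    linarith
  have hx0 : x = 0 := by nlinarith [Complex.normSq_nonneg z]
  have hz0 : z = 0 := Complex.normSq_eq_zero.1 (by nlinarith [Complex.normSq_nonneg z])
  ext i j
  fin_cases i <;> fin_cases j <;> simp [hx, hx', hz, hz', hx0, hz0]

variable {m n : Type*}

/-- The reduced matrix of the first part of a bipartite matrix. -/
def traceRight [Fintype n] (ρ : Matrix (m × n) (m × n) ℂ) : Matrix m m ℂ :=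
  of fun i k ↦ ∑ j, ρ (i, j) (k, j)

/-- The reduced matrix of the second part of a bipartite matrix. -/
def traceLeft [Fintype m] (ρ : Matrix (m × n) (m × n) ℂ) : Matrix n n ℂ :=
  of fun j l ↦ ∑ i, ρ (i, j) (i, l)

lemma isHermitian_traceRight [Fintype n] {ρ : Matrix (m × n) (m × n) ℂ} (hρ : ρ.IsHermitian) :
    (traceRight ρ).IsHermitian := by
  ext i k
  simp [traceRight, hρ.apply]

lemma isHermitian_traceLeft [Fintype m] {ρ : Matrix (m × n) (m × n) ℂ} (hρ : ρ.IsHermitian) :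
    (traceLeft ρ).IsHermitian := by
  ext j l
  simp [traceLeft, hρ.apply]

variable [Fintype m] [Fintype n]

lemma trace_traceRight (ρ : Matrix (m × n) (m × n) ℂ) : (traceRight ρ).trace = ρ.trace := by
  simp [traceRight, trace, Fintype.sum_prod_type]

lemma trace_traceLeft (ρ : Matrix (m × n) (m × n) ℂ) : (traceLeft ρ).trace = ρ.trace := by
  simp [traceLeft, trace, Fintype.sum_prod_type_right]

lemma trace_localFilter_one_right [DecidableEq n] (A : Matrix m m ℂ)
    (ρ : Matrix (m × n) (m × n) ℂ) :
    (localFilter A 1 ρ).trace = (A * traceRight ρ * Aᴴ).trace := by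
  rw [← trace_traceRight]
  congr 1
  ext i k
  simp only [traceRight, localFilter_apply, Matrix.mul_apply, Fintype.sum_prod_type, one_apply,
    of_apply, conjTranspose_apply, mul_ite, mul_one, mul_zero, ite_mul, zero_mul, apply_ite star,
    star_zero, Finset.sum_ite_irrel, Finset.sum_const_zero, Finset.sum_ite_eq, Finset.mem_univ,
    if_true, Finset.mul_sum, Finset.sum_mul]
  rw [Finset.sum_comm]
  exact Finset.sum_congr rfl fun _ _ ↦ Finset.sum_comm

lemma trace_localFilter_one_left [DecidableEq m] (B : Matrix n n ℂ)
    (ρ : Matrix (m × n) (m × n) ℂ) :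
    (localFilter 1 B ρ).trace = (B * traceLeft ρ * Bᴴ).trace := by
  rw [← trace_traceLeft]
  congr 1
  ext j l
  simp only [traceLeft, localFilter_apply, Matrix.mul_apply, Fintype.sum_prod_type_right, one_apply,
    of_apply, conjTranspose_apply, ite_mul, one_mul, zero_mul, mul_zero, apply_ite star,
    star_zero, mul_ite, Finset.sum_ite_irrel, Finset.sum_const_zero, Finset.sum_ite_eq,
    Finset.mem_univ, if_true, Finset.mul_sum, Finset.sum_mul]
  rw [Finset.sum_comm]
  exact Finset.sum_congr rfl fun _ _ ↦ Finset.sum_comm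

lemma IsExtremal.traceRight_eq {ρ : M4} (h : IsExtremal ρ) (hρ : ρ.IsHermitian)
    (htr : ρ.trace = 1) : traceRight ρ = (1 / 2 : ℂ) • 1 :=
  eq_half_of_norm_det_le_trace (isHermitian_traceRight hρ) (by rw [trace_traceRight, htr])
    fun A ↦ by simpa [trace_localFilter_one_right] using h A 1

lemma IsExtremal.traceLeft_eq {ρ : M4} (h : IsExtremal ρ) (hρ : ρ.IsHermitian)
    (htr : ρ.trace = 1) : traceLeft ρ = (1 / 2 : ℂ) • 1 :=
  eq_half_of_norm_det_le_trace (isHermitian_traceLeft hρ) (by rw [trace_traceLeft, htr])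
    fun B ↦ by simpa [trace_localFilter_one_left] using h 1 B

end Marginals

section Quaternions

open scoped Quaternion RealInnerProductSpace

variable {D : Type*} [DivisionRing D]

lemma exists_mul_eq_or_mul_eq_neg {u w : D} (hu : u * u = -1) (hw : w * w = -1) :
    ∃ a, a ≠ 0 ∧ (a * u = w * a ∨ a * u = -(w * a)) ∧
      ∀ c, c * u = -(u * c) → c * w = -(w * c) → a * c = c * a := by
  rcases eq_or_ne w (-u) with rfl | hwu
  · exact ⟨1, one_ne_zero, .inr (by simp), fun c _ _ ↦ by simp⟩
  refine ⟨1 - w * u, fun h ↦ hwu ?_, .inl ?_, fun c hcu hcw ↦ ?_⟩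
  · calc w = -(w * u * u) := by rw [mul_assoc, hu, mul_neg_one, neg_neg]
      _ = -u := by rw [← sub_eq_zero.1 h, one_mul]
  · rw [sub_mul, mul_sub, mul_assoc, hu, ← mul_assoc, hw]
    simp [add_comm]
  · have hcomm : w * u * c = c * (w * u) := by
      rw [← mul_assoc, hcw, neg_mul, mul_assoc w c u, hcu, mul_neg, neg_neg, mul_assoc]
    rw [sub_mul, mul_sub, hcomm, one_mul, mul_one]

lemma exists_conj_anticommuting_pair {u₁ u₂ w₁ w₂ : D} (hu₁ : u₁ * u₁ = -1) (hu₂ : u₂ * u₂ = -1)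
    (hu : u₁ * u₂ = -(u₂ * u₁)) (hw₁ : w₁ * w₁ = -1) (hw₂ : w₂ * w₂ = -1)
    (hw : w₁ * w₂ = -(w₂ * w₁)) :
    ∃ a, a ≠ 0 ∧ (a * u₁ * a⁻¹ = w₁ ∨ a * u₁ * a⁻¹ = -w₁) ∧
      (a * u₂ * a⁻¹ = w₂ ∨ a * u₂ * a⁻¹ = -w₂) := by
  obtain ⟨a, ha, hau₁, -⟩ := exists_mul_eq_or_mul_eq_neg hu₁ hw₁
  have hau₁' : a * u₁ * a⁻¹ = w₁ ∨ a * u₁ * a⁻¹ = -w₁ := by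
    simpa only [mul_inv_eq_iff_eq_mul₀ ha, neg_mul] using hau₁
  have hconj : ∀ x y : D, a * x * a⁻¹ * (a * y * a⁻¹) = a * (x * y) * a⁻¹ := fun x y ↦ by
    simp [mul_assoc, ha]
  have hsq : a * u₂ * a⁻¹ * (a * u₂ * a⁻¹) = -1 := by
    rw [hconj, hu₂, mul_neg_one, neg_mul, mul_inv_cancel₀ ha]
  have hanti : w₁ * (a * u₂ * a⁻¹) = -(a * u₂ * a⁻¹ * w₁) := by
    have hanti' : a * u₁ * a⁻¹ * (a * u₂ * a⁻¹) = -(a * u₂ * a⁻¹ * (a * u₁ * a⁻¹)) := by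
      rw [hconj, hconj, hu, mul_neg, neg_mul]
    rcases hau₁' with h | h <;> rw [h] at hanti'
    · exact hanti'
    · simpa using congrArg Neg.neg hanti'
  obtain ⟨b, hb, hbu₂, hcomm⟩ := exists_mul_eq_or_mul_eq_neg hsq hw₂
  have hbw₁ : b * w₁ * b⁻¹ = w₁ := by
    rw [mul_inv_eq_iff_eq_mul₀ hb, hcomm w₁ hanti hw]
  have hmul : ∀ x : D, b * a * x * (b * a)⁻¹ = b * (a * x * a⁻¹) * b⁻¹ := fun x ↦ by
    simp [mul_assoc]
  refine ⟨b * a, mul_ne_zero hb ha, ?_, ?_⟩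
  · rw [hmul]
    exact hau₁'.imp (fun h ↦ by rw [h, hbw₁]) fun h ↦ by rw [h, mul_neg, neg_mul, hbw₁]
  · simpa only [hmul, mul_inv_eq_iff_eq_mul₀ hb, neg_mul] using hbu₂

lemma quaternion_inner_eq (x y : ℍ) :
    ⟪x, y⟫ = x.re * y.re + x.imI * y.imI + x.imJ * y.imJ + x.imK * y.imK := by
  simp [Quaternion.inner_def]

lemma inner_mul_mul (a b x y : ℍ) :
    ⟪a * x * b, a * y * b⟫ = Quaternion.normSq a * Quaternion.normSq b * ⟪x, y⟫ := by
  simp only [quaternion_inner_eq, Quaternion.normSq_def', Quaternion.re_mul, Quaternion.imI_mul,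
    Quaternion.imJ_mul, Quaternion.imK_mul]
  ring

lemma mul_self_eq_neg_one_of_inner {w : ℍ} (h : ⟪w, 1⟫ = 0) (hw : ‖w‖ = 1) : w * w = -1 := by
  have hstar : star w = -w := Quaternion.star_eq_neg.2 (by simpa [quaternion_inner_eq] using h)
  rw [← neg_inj, ← mul_neg, ← hstar, Quaternion.self_mul_star, Quaternion.normSq_eq_norm_mul_self,
    hw]
  simp

lemma mul_eq_neg_mul_of_inner {w w' : ℍ} (h : ⟪w, 1⟫ = 0) (h' : ⟪w', 1⟫ = 0)
    (hww' : ⟪w, w'⟫ = 0) : w * w' = -(w' * w) := by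
  have hw : w.re = 0 := by simpa [quaternion_inner_eq] using h
  have hw' : w'.re = 0 := by simpa [quaternion_inner_eq] using h'
  rw [quaternion_inner_eq] at hww'
  ext <;> simp [hw, hw'] at hww' ⊢ <;> linarith

/-- The orthonormal basis `1, i, j, k` of the quaternions. -/
def quatUnit : Fin 4 → ℍ := ![1, ⟨0, 1, 0, 0⟩, ⟨0, 0, 1, 0⟩, ⟨0, 0, 0, 1⟩]

lemma orthonormal_quatUnit : Orthonormal ℝ quatUnit := by
  rw [orthonormal_iff_ite]
  intro k l
  rw [quaternion_inner_eq]
  fin_cases k <;> fin_cases l <;> simp [quatUnit]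

lemma eq_smul_quatUnit_three {x : ℍ} (h : ∀ k, k ≠ 3 → ⟪x, quatUnit k⟫ = 0) :
    x = x.imK • quatUnit 3 := by
  have h₀ := h 0 (by decide)
  have h₁ := h 1 (by decide)
  have h₂ := h 2 (by decide)
  simp only [quaternion_inner_eq] at h₀ h₁ h₂
  ext <;> simp only [Quaternion.re_smul, Quaternion.imI_smul, Quaternion.imJ_smul,
    Quaternion.imK_smul] <;> simp_all [quatUnit]

lemma exists_conj_eq_smul_quatUnit {w : Fin 4 → ℍ} (hw : Orthonormal ℝ w) (hw₀ : w 0 = 1) :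
    ∃ c : ℍ, c ≠ 0 ∧ ∀ k, ∃ t : ℝ, c * w k * c⁻¹ = t • quatUnit k := by
  have hsq {u : Fin 4 → ℍ} (hu : Orthonormal ℝ u) (hu₀ : u 0 = 1) (k) (hk : k ≠ 0) :
      u k * u k = -1 :=
    mul_self_eq_neg_one_of_inner (hu₀ ▸ hu.2 hk) (hu.1 k)
  have hanti {u : Fin 4 → ℍ} (hu : Orthonormal ℝ u) (hu₀ : u 0 = 1) :
      u 1 * u 2 = -(u 2 * u 1) :=
    mul_eq_neg_mul_of_inner (hu₀ ▸ hu.2 (by decide)) (hu₀ ▸ hu.2 (by decide)) (hu.2 (by decide))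
  obtain ⟨c, hc, hc₁, hc₂⟩ := exists_conj_anticommuting_pair
    (hsq hw hw₀ 1 (by decide)) (hsq hw hw₀ 2 (by decide)) (hanti hw hw₀)
    (hsq orthonormal_quatUnit rfl 1 (by decide)) (hsq orthonormal_quatUnit rfl 2 (by decide))
    (hanti orthonormal_quatUnit rfl)
  have hpm : ∀ k, k ≠ 3 → c * w k * c⁻¹ = quatUnit k ∨ c * w k * c⁻¹ = -quatUnit k := by
    intro k hk
    fin_cases k
    exacts [.inl (by simp [hw₀, hc, quatUnit]), hc₁, hc₂, absurd rfl hk]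
  have horth : ∀ k, k ≠ 3 → ⟪c * w 3 * c⁻¹, quatUnit k⟫ = 0 := by
    intro k hk
    have hzero : ⟪c * w 3 * c⁻¹, c * w k * c⁻¹⟫ = 0 := by
      rw [inner_mul_mul, hw.2 hk.symm, mul_zero]
    rcases hpm k hk with h | h <;> simpa [h] using hzero
  refine ⟨c, hc, fun k ↦ ?_⟩
  rcases eq_or_ne k 3 with rfl | hk
  · exact ⟨_, eq_smul_quatUnit_three horth⟩
  · exact (hpm k hk).elim (⟨1, by simpa using ·⟩) (⟨-1, by simpa using ·⟩)

lemma exists_mul_mul_eq_smul_quatUnit {v : Fin 4 → ℍ} (hv : Orthonormal ℝ v) :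
    ∃ a b : ℍ, a ≠ 0 ∧ b ≠ 0 ∧ ∀ k, ∃ t : ℝ, a * v k * b = t • quatUnit k := by
  have hnorm : Quaternion.normSq (v 0) = 1 := by
    rw [Quaternion.normSq_eq_norm_mul_self, hv.1 0, one_mul]
  have hw : Orthonormal ℝ fun k ↦ v k * star (v 0) := by
    rw [orthonormal_iff_ite] at hv ⊢
    intro k l
    simpa [hnorm, hv] using inner_mul_mul 1 (star (v 0)) (v k) (v l)
  obtain ⟨c, hc, hcv⟩ := exists_conj_eq_smul_quatUnit hw
    (by simp [Quaternion.self_mul_star, hnorm])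
  refine ⟨c, star (v 0) * c⁻¹, hc,
    mul_ne_zero (star_ne_zero.2 (hv.ne_zero 0)) (inv_ne_zero hc), fun k ↦ ?_⟩
  simpa only [mul_assoc] using hcv k

end Quaternions

section MagicKets

open scoped Quaternion RealInnerProductSpace

lemma smul_eq_sum_smul_pureMat {ι n : Type*} [Fintype ι] [Fintype n] [DecidableEq ι]
    (hcard : Fintype.card ι = Fintype.card n) {ρ : Matrix n n ℂ} {e : ι → n → ℂ}
    {μ : ι → ℝ} {c : ℝ} (hc : c ≠ 0)
    (he : ∀ k l, star (e k) ⬝ᵥ e l = if k = l then (c : ℂ) else 0)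
    (hρ : ∀ k, ρ *ᵥ e k = μ k • e k) : c • ρ = ∑ k, μ k • pureMat (e k) := by
  classical
  let E : Matrix n ι ℂ := of fun i k ↦ e k i
  have hE : Eᴴ * E = c • 1 := by
    ext k l
    simpa [E, Matrix.mul_apply, dotProduct, one_apply] using he k l
  have hE' : E * Eᴴ = c • 1 := by
    have h : (c⁻¹ • Eᴴ) * E = 1 := by rw [Matrix.smul_mul, hE, inv_smul_smul₀ hc]
    rw [mul_eq_one_comm_of_card_eq _ _ _ hcard, Matrix.mul_smul] at h
    rw [← h, smul_inv_smul₀ hc]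
  have hρE : ρ * E = E * diagonal fun k ↦ (μ k : ℂ) := by
    ext i k
    rw [Matrix.mul_diagonal, mul_comm]
    exact congrFun (hρ k) i
  calc c • ρ = ρ * (E * Eᴴ) := by rw [hE', Matrix.mul_smul, Matrix.mul_one]
    _ = E * diagonal (fun k ↦ (μ k : ℂ)) * Eᴴ := by rw [← Matrix.mul_assoc, hρE]
    _ = ∑ k, μ k • pureMat (e k) := by
      ext i j
      rw [Matrix.mul_apply, Matrix.sum_apply]
      refine Finset.sum_congr rfl fun k _ ↦ ?_
      rw [Matrix.mul_diagonal, Matrix.smul_apply, pureMat, vecMulVec_apply, Complex.real_smul,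
        mul_comm (E i k), mul_assoc]
      rfl

/-- The representation of the quaternions as real multiples of `SU(2)`, with the imaginary units
ordered as the Bell states. -/
def quatMat : ℍ →ₐ[ℝ] M2 :=
  QuaternionAlgebra.lift
    { i := !![I, 0; 0, -I]
      j := !![0, I; I, 0]
      k := !![0, -1; 1, 0]
      i_mul_i := by ext i j; fin_cases i <;> fin_cases j <;> simp
      j_mul_j := by ext i j; fin_cases i <;> fin_cases j <;> simp
      i_mul_j := by ext i j; fin_cases i <;> fin_cases j <;> simp
      j_mul_i := by ext i j; fin_cases i <;> fin_cases j <;> simp }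

lemma quatMat_eq (q : ℍ) :
    quatMat q = !![⟨q.re, q.imI⟩, ⟨-q.imK, q.imJ⟩; ⟨q.imK, q.imJ⟩, ⟨q.re, -q.imI⟩] := by
  have h : quatMat q = q.re • 1 + q.imI • !![I, 0; 0, -I] + q.imJ • !![0, I; I, 0] +
      q.imK • !![0, -1; 1, 0] := by
    rw [← Algebra.algebraMap_eq_smul_one]
    rfl
  ext i j
  fin_cases i <;> fin_cases j <;> simp [h, Complex.ext_iff]

lemma det_quatMat (q : ℍ) : (quatMat q).det = ((Quaternion.normSq q : ℝ) : ℂ) := by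
  rw [quatMat_eq, det_fin_two_of, Quaternion.normSq_def']
  apply Complex.ext <;>
    simp only [Complex.sub_re, Complex.sub_im, Complex.mul_re, Complex.mul_im, Complex.ofReal_re,
      Complex.ofReal_im] <;> ring

/-- The vectors of `ℂ² ⊗ ℂ²` with real coordinates in the magic basis, parametrised by quaternions:
local filters by `SU(2)` act on them as left and right multiplications. -/
def magicKet : ℍ →ₗ[ℝ] Q2 → ℂ where
  toFun q := vec (quatMat q)
  map_add' p q := by rw [map_add, vec_add]
  map_smul' c q := by rw [map_smul, vec_smul, RingHom.id_apply]

lemma magicKet_apply (q : ℍ) (p : Q2) : magicKet q p = quatMat q p.2 p.1 := rfl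

lemma kronecker_mulVec_magicKet (a b x : ℍ) :
    ((quatMat b)ᵀ ⊗ₖ quatMat a) *ᵥ magicKet x = magicKet (a * x * b) := by
  simp [magicKet, kronecker_mulVec_vec]

lemma star_magicKet_dotProduct_magicKet (x y : ℍ) :
    star (magicKet x) ⬝ᵥ magicKet y = ((2 * ⟪x, y⟫ : ℝ) : ℂ) := by
  rw [quaternion_inner_eq]
  simp only [dotProduct, Fintype.sum_prod_type, Fin.sum_univ_two, Pi.star_apply, magicKet_apply,
    quatMat_eq, of_apply, cons_val_zero, cons_val_one, cons_val', cons_val_fin_one, star_def]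
  apply Complex.ext <;>
    simp only [Complex.add_re, Complex.add_im, Complex.mul_re, Complex.mul_im, Complex.conj_re,
      Complex.conj_im, Complex.ofReal_re, Complex.ofReal_im] <;> ring

lemma magicKet_injective : Function.Injective magicKet := by
  rw [injective_iff_map_eq_zero]
  intro x hx
  have h := star_magicKet_dotProduct_magicKet x x
  rw [hx, dotProduct_zero] at h
  simpa using h.symm

lemma mem_range_magicKet {w : Q2 → ℂ} (h₁₁ : w (1, 1) = star (w (0, 0)))
    (h₁₀ : w (1, 0) = -star (w (0, 1))) : w ∈ LinearMap.range magicKet := by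
  let q : ℍ := ⟨(w (0, 0)).re, (w (0, 0)).im, (w (0, 1)).im, (w (0, 1)).re⟩
  refine ⟨q, funext fun ⟨i, j⟩ ↦ ?_⟩
  rw [magicKet_apply, quatMat_eq]
  fin_cases i <;> fin_cases j <;> simp [q, h₁₁, h₁₀, Complex.ext_iff]

variable {ρ : M4}

lemma mulVec_magicKet_mem_range (hρ : ρ.IsHermitian) (hright : traceRight ρ = (1 / 2 : ℂ) • 1)
    (hleft : traceLeft ρ = (1 / 2 : ℂ) • 1) (x : ℍ) :
    ρ *ᵥ magicKet x ∈ LinearMap.range magicKet := by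
  have hr : ∀ i k, ρ (i, 0) (k, 0) + ρ (i, 1) (k, 1) = if i = k then 1 / 2 else 0 := fun i k ↦ by
    simpa [traceRight, one_apply] using congrFun (congrFun hright i) k
  have hl : ∀ j l, ρ (0, j) (0, l) + ρ (1, j) (1, l) = if j = l then 1 / 2 else 0 := fun j l ↦ by
    simpa [traceLeft, one_apply] using congrFun (congrFun hleft j) l
  obtain ⟨w, hw⟩ : ∃ w, magicKet x = w := ⟨_, rfl⟩
  have hw₁₁ : w (1, 1) = star (w (0, 0)) := by
    simp [← hw, magicKet_apply, quatMat_eq, Complex.ext_iff]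
  have hw₁₀ : w (1, 0) = -star (w (0, 1)) := by
    simp [← hw, magicKet_apply, quatMat_eq, Complex.ext_iff]
  have hmul : ∀ p, (ρ *ᵥ w) p =
      ρ p (0, 0) * w (0, 0) + ρ p (0, 1) * w (0, 1) + (ρ p (1, 0) * -star (w (0, 1)) +
        ρ p (1, 1) * star (w (0, 0))) := fun p ↦ by
    simp [mulVec, dotProduct, Fintype.sum_prod_type, hw₁₁, hw₁₀]
  have h₁₀ : ρ (1, 0) (0, 0) + ρ (1, 1) (0, 1) = 0 := hr 1 0
  have h₀₁ : ρ (0, 0) (0, 1) + ρ (1, 0) (1, 1) = 0 := hl 0 1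
  have h₀₁' : ρ (0, 1) (0, 0) + ρ (1, 1) (1, 0) = 0 := hl 1 0
  have hdiag : ρ (1, 1) (1, 1) = ρ (0, 0) (0, 0) := by
    linear_combination (hr 1 1).trans (hl 0 0).symm
  have hdiag' : ρ (0, 1) (0, 1) = ρ (1, 0) (1, 0) := by linear_combination hr 0 0 - hl 0 0
  rw [hw]
  refine mem_range_magicKet ?_ ?_ <;>
    simp only [hmul, star_add, star_mul', star_neg, star_star, hρ.apply]
  · linear_combination h₁₀ * w (0, 1) - h₀₁' * star (w (0, 1)) + hdiag * star (w (0, 0))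
  · linear_combination h₁₀ * w (0, 0) + h₀₁ * star (w (0, 0)) + hdiag' * star (w (0, 1))

lemma exists_orthonormalBasis_mulVec_magicKet (hρ : ρ.IsHermitian)
    (hright : traceRight ρ = (1 / 2 : ℂ) • 1) (hleft : traceLeft ρ = (1 / 2 : ℂ) • 1) :
    ∃ (v : OrthonormalBasis (Fin 4) ℝ ℍ) (μ : Fin 4 → ℝ), Antitone μ ∧
      ∀ k, ρ *ᵥ magicKet (v k) = μ k • magicKet (v k) := by
  obtain ⟨g, hg⟩ := magicKet.exists_leftInverse_of_injective
    (LinearMap.ker_eq_bot.2 magicKet_injective)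
  let T : ℍ →ₗ[ℝ] ℍ := g ∘ₗ ρ.mulVecLin.restrictScalars ℝ ∘ₗ magicKet
  have hT : ∀ x, magicKet (T x) = ρ *ᵥ magicKet x := fun x ↦ by
    obtain ⟨y, hy⟩ := mulVec_magicKet_mem_range hρ hright hleft x
    have hgy : g (magicKet y) = y := LinearMap.congr_fun hg y
    simp [T, ← hy, hgy]
  have hsymm : T.IsSymmetric := fun x y ↦ by
    have h : star (magicKet (T x)) ⬝ᵥ magicKet y = star (magicKet x) ⬝ᵥ magicKet (T y) := by
      rw [hT, hT, star_mulVec, hρ.eq, dotProduct_mulVec]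
    simp only [star_magicKet_dotProduct_magicKet, Complex.ofReal_inj] at h
    exact mul_left_cancel₀ two_ne_zero h
  have hfinrank : Module.finrank ℝ ℍ = 4 := Quaternion.finrank_eq_four
  refine ⟨hsymm.eigenvectorBasis hfinrank, hsymm.eigenvalues hfinrank,
    hsymm.eigenvalues_antitone hfinrank, fun k ↦ ?_⟩
  rw [← hT, hsymm.apply_eigenvectorBasis, map_smul]
  rfl

end MagicKets

section BellDiagonal

open scoped Quaternion RealInnerProductSpace

lemma pureMat_smul {n : Type*} (c : ℂ) (x : n → ℂ) :
    pureMat (c • x) = (Complex.normSq c : ℝ) • pureMat x := by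
  ext i j
  simp only [pureMat, vecMulVec_apply, Pi.smul_apply, Pi.star_apply, smul_eq_mul, star_mul',
    Matrix.smul_apply, Complex.real_smul, ← Complex.mul_conj, star_def]
  ring

lemma normSq_invSqrt2 : Complex.normSq invSqrt2 = 1 / 2 := by
  simp [invSqrt2, Complex.normSq_ofReal]

/-- The phases by which the Bell states differ from the magic kets of `1, i, j, k`. -/
def bellPhase : Fin 4 → ℂ := ![1, -I, -I, 1]

lemma normSq_bellPhase (k : Fin 4) : Complex.normSq (bellPhase k) = 1 := by
  fin_cases k <;> simp [bellPhase]

lemma bell_eq_smul_magicKet (k : Fin 4) :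
    bell k = (invSqrt2 * bellPhase k) • magicKet (quatUnit k) := by
  ext ⟨i, j⟩
  rw [Pi.smul_apply, magicKet_apply, quatMat_eq]
  fin_cases k <;> fin_cases i <;> fin_cases j <;>
    simp [bell, quatUnit, bellPhase, mul_assoc, Complex.ext_iff]

lemma bellProj_eq_smul_pureMat (k : Fin 4) :
    BellProj k = (1 / 2 : ℝ) • pureMat (magicKet (quatUnit k)) := by
  rw [BellProj, ← pureMat, bell_eq_smul_magicKet, pureMat_smul, map_mul, normSq_invSqrt2,
    normSq_bellPhase, mul_one]

lemma pureMat_magicKet_smul_quatUnit (t : ℝ) (k : Fin 4) :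
    pureMat (magicKet (t • quatUnit k)) = (2 * t ^ 2) • BellProj k := by
  rw [bellProj_eq_smul_pureMat, map_smul, ← Complex.coe_smul, pureMat_smul, Complex.normSq_ofReal,
    smul_smul]
  congr 1
  ring

lemma star_bell_dotProduct_bell (k l : Fin 4) :
    star (bell k) ⬝ᵥ bell l = if k = l then 1 else 0 := by
  rw [bell_eq_smul_magicKet, bell_eq_smul_magicKet, star_smul, smul_dotProduct, dotProduct_smul,
    star_magicKet_dotProduct_magicKet, orthonormal_iff_ite.1 orthonormal_quatUnit]
  split_ifs with h
  · subst h
    rw [smul_eq_mul, smul_eq_mul, ← mul_assoc, star_def, ← Complex.normSq_eq_conj_mul_self,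
      map_mul, normSq_invSqrt2, normSq_bellPhase]
    norm_num
  · simp

variable {ρ : M4} {l : Fin 4 → ℝ}

lemma rhoBD_smul (c : ℝ) (l : Fin 4 → ℝ) : rhoBD (c • l) = c • rhoBD l := by
  simp [rhoBD, Finset.smul_sum, mul_smul]

lemma rhoBD_mulVec_bell (l : Fin 4 → ℝ) (k : Fin 4) : rhoBD l *ᵥ bell k = (l k : ℂ) • bell k := by
  simp [rhoBD, BellProj, sum_mulVec, smul_mulVec, vecMulVec_mulVec, star_bell_dotProduct_bell]

lemma IsDensity.isWeight (h : IsDensity (rhoBD l)) : IsWeight l := by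
  refine ⟨fun k ↦ ?_, ?_⟩
  · have hk := h.1.dotProduct_mulVec_nonneg (bell k)
    rwa [rhoBD_mulVec_bell, dotProduct_smul, star_bell_dotProduct_bell, if_pos rfl, smul_eq_mul,
      mul_one, Complex.zero_le_real] at hk
  · have htr := h.2
    simp only [rhoBD, BellProj, trace_sum, trace_smul, trace_vecMulVec,
      dotProduct_comm (bell _), star_bell_dotProduct_bell, smul_eq_mul, mul_one, if_true] at htr
    exact_mod_cast htr

lemma IsOrdered.smul (h : IsOrdered l) {c : ℝ} (hc : 0 ≤ c) : IsOrdered (c • l) :=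
  ⟨mul_le_mul_of_nonneg_left h.1 hc, mul_le_mul_of_nonneg_left h.2.1 hc,
    mul_le_mul_of_nonneg_left h.2.2 hc⟩

lemma IsDensity.exists_sloccEquiv_rhoBD (hρ : IsDensity ρ) (hl : IsOrdered l)
    (h : LocalEquiv ρ (rhoBD l)) :
    ∃ l', IsWeight l' ∧ IsOrdered l' ∧ SLOCCequiv ρ (rhoBD l') := by
  obtain ⟨c, hc, hdensity, hequiv⟩ := hρ.exists_smul_of_localEquiv h
  rw [← rhoBD_smul] at hdensity hequiv
  exact ⟨c • l, hdensity.isWeight, hl.smul hc.le, hequiv⟩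

lemma exists_localEquiv_rhoBD_of_traceRight_traceLeft (hρ : ρ.IsHermitian)
    (hright : traceRight ρ = (1 / 2 : ℂ) • 1) (hleft : traceLeft ρ = (1 / 2 : ℂ) • 1) :
    ∃ l, IsOrdered l ∧ LocalEquiv ρ (rhoBD l) := by
  obtain ⟨v, μ, hμ, hρv⟩ := exists_orthonormalBasis_mulVec_magicKet hρ hright hleft
  obtain ⟨a, b, ha, hb, hab⟩ := exists_mul_mul_eq_smul_quatUnit v.orthonormal
  choose t ht using hab
  have hexpand : (2 : ℝ) • ρ = ∑ k, μ k • pureMat (magicKet (v k)) := by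
    refine smul_eq_sum_smul_pureMat (by simp) two_ne_zero (fun k l ↦ ?_) hρv
    rw [star_magicKet_dotProduct_magicKet, orthonormal_iff_ite.1 v.orthonormal]
    split_ifs <;> simp
  have ht_sq : ∀ k, t k ^ 2 = (‖a‖ * ‖b‖) ^ 2 := fun k ↦ by
    have hnorm := congrArg (‖·‖) (ht k)
    simp only [norm_mul, norm_smul, v.orthonormal.1 k, orthonormal_quatUnit.1 k, mul_one] at hnorm
    rw [hnorm, Real.norm_eq_abs, sq_abs]
  have hfilter : localFilter (quatMat b)ᵀ (quatMat a) ρ = (‖a‖ * ‖b‖) ^ 2 • rhoBD μ := by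
    have htwo : (2 : ℝ) • localFilter (quatMat b)ᵀ (quatMat a) ρ =
        (2 : ℝ) • (‖a‖ * ‖b‖) ^ 2 • rhoBD μ := by
      simp_rw [← localFilter_smul, hexpand, localFilter_sum, localFilter_smul, localFilter_pureMat,
        kronecker_mulVec_magicKet, ht, pureMat_magicKet_smul_quatUnit, ht_sq, rhoBD,
        Finset.smul_sum, smul_smul]
      refine Finset.sum_congr rfl fun k _ ↦ ?_
      module
    exact smul_right_injective _ two_ne_zero htwo
  have hdet : ∀ q : ℍ, q ≠ 0 → (quatMat q).det ≠ 0 := fun q hq ↦ by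
    simpa [det_quatMat] using hq
  have hequiv := localEquiv_localFilter ((det_transpose (quatMat b)).trans_ne (hdet b hb))
    (hdet a ha) ρ
  have hc : 0 < (‖a‖ * ‖b‖) ^ 2 := by positivity
  refine ⟨μ, ⟨hμ (by decide), hμ (by decide), hμ (by decide)⟩, ?_⟩
  simpa [hfilter, smul_smul, hc.ne'] using hequiv.smul_right (inv_pos.2 hc)

end BellDiagonal

section ZeroCorner

variable {ρ : M4}

lemma exists_det_ne_zero_row_one_eq {x : Fin 2 → ℂ} (hx : x ≠ 0) :
    ∃ A : M2, A.det ≠ 0 ∧ A 1 = x := by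
  refine ⟨!![-star (x 1), star (x 0); x 0, x 1], ?_, by ext i; fin_cases i <;> rfl⟩
  have hdet : (!![-star (x 1), star (x 0); x 0, x 1]).det = -(star x ⬝ᵥ x) := by
    simp only [det_fin_two_of, dotProduct, Fin.sum_univ_two, Pi.star_apply]
    ring
  rw [hdet]
  exact neg_ne_zero.2 (dotProduct_star_self_eq_zero.not.2 hx)

lemma exists_localEquiv_apply_one_one_eq_zero {A B : M2} (hA : A ≠ 0) (hB : B ≠ 0)
    (h : localFilter A B ρ = 0) : ∃ σ, LocalEquiv ρ σ ∧ σ (1, 1) (1, 1) = 0 := by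
  obtain ⟨i, hi⟩ := Function.ne_iff.1 hA
  obtain ⟨j, hj⟩ := Function.ne_iff.1 hB
  obtain ⟨A', hA', hrowA⟩ := exists_det_ne_zero_row_one_eq hi
  obtain ⟨B', hB', hrowB⟩ := exists_det_ne_zero_row_one_eq hj
  refine ⟨_, localEquiv_localFilter hA' hB' ρ, ?_⟩
  have hij : localFilter A B ρ (i, j) (i, j) = 0 := by rw [h, Matrix.zero_apply]
  rw [localFilter_apply] at hij ⊢
  simpa only [hrowA, hrowB] using hij

lemma exists_eq_gram {n : Type*} [Fintype n] {M : Matrix n n ℂ} (hM : M.PosSemidef) :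
    ∃ c : n → EuclideanSpace ℂ n, M = gram ℂ c := by
  classical
  obtain ⟨C, rfl⟩ : ∃ C : Matrix n n ℂ, M = Cᴴ * C := by
    open scoped MatrixOrder Matrix.Norms.L2Operator in
    exact CStarAlgebra.nonneg_iff_eq_star_mul_self.1 hM.nonneg
  refine ⟨fun i ↦ WithLp.toLp 2 fun k ↦ C k i, ?_⟩
  ext i j
  simp [gram_apply, Matrix.mul_apply, PiLp.inner_apply, mul_comm]

/-- The matrix supported on `|00⟩, |01⟩, |10⟩` with diagonal `p, q, r` whose only coherence `d` is
the one between `|01⟩` and `|10⟩`. Every state with vanishing `|11⟩` population can be filtered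
into this form. -/
def xState (p q r : ℝ) (d : ℂ) : M4 := fun x y ↦
  !![(p : ℂ), 0, 0, 0; 0, q, d, 0; 0, star d, r, 0; 0, 0, 0, 0] (idx4 x) (idx4 y)

/-- Write `ρ` as the Gram matrix of `c`. A unitriangular filter replaces `c (0, 0)` by
`c (0, 0) - α • c (1, 0) - β • c (0, 1)`, since `c (1, 1) = 0`; choose this vector orthogonal to
`c (0, 1)` and `c (1, 0)`. -/
lemma exists_localEquiv_xState (hρ : ρ.PosSemidef) (hcorner : ρ (1, 1) (1, 1) = 0) :
    ∃ (p q r : ℝ) (d : ℂ), 0 ≤ p ∧ 0 ≤ q ∧ 0 ≤ r ∧ ‖d‖ ^ 2 ≤ q * r ∧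
      LocalEquiv ρ (xState p q r d) := by
  obtain ⟨c, rfl⟩ := exists_eq_gram hρ
  have hc : c (1, 1) = 0 := inner_self_eq_zero.1 hcorner
  obtain ⟨y, hy, z, hz, hyz⟩ :=
    (Submodule.span ℂ {c (0, 1), c (1, 0)}).exists_add_mem_mem_orthogonal (c (0, 0))
  obtain ⟨β, α, rfl⟩ := Submodule.mem_span_pair.1 hy
  have hz₀₁ : inner ℂ (c (0, 1)) z = 0 := hz _ (Submodule.subset_span (by simp))
  have hz₁₀ : inner ℂ (c (1, 0)) z = 0 := hz _ (Submodule.subset_span (by simp))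
  have hself (x : EuclideanSpace ℂ Q2) : ((‖x‖ ^ 2 : ℝ) : ℂ) = inner ℂ x x := by
    rw [inner_self_eq_norm_sq_to_K]
    simp
  refine ⟨‖z‖ ^ 2, ‖c (0, 1)‖ ^ 2, ‖c (1, 0)‖ ^ 2, inner ℂ (c (0, 1)) (c (1, 0)), by positivity,
    by positivity, by positivity, ?_, ?_⟩
  · rw [← mul_pow]
    gcongr
    exact norm_inner_le_norm _ _
  · convert localEquiv_localFilter (A := !![1, -star α; 0, 1]) (B := !![1, -star β; 0, 1])
      (by simp) (by simp) (gram ℂ c) using 1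
    ext ⟨i, j⟩ ⟨k, l⟩
    simp only [localFilter_apply, gram_apply, xState, hself]
    fin_cases i <;> fin_cases j <;> fin_cases k <;> fin_cases l <;>
      simp [idx4, Fintype.sum_prod_type, hyz, hc, hz₀₁, hz₁₀, inner_eq_zero_symm.1 hz₀₁,
        inner_eq_zero_symm.1 hz₁₀] <;>
      ring

lemma localFilter_diagonal_xState (α γ β δ : ℂ) (p q r : ℝ) (d : ℂ) :
    localFilter (diagonal ![α, γ]) (diagonal ![β, δ]) (xState p q r d) =
      xState (normSq (α * β) * p) (normSq (α * δ) * q) (normSq (γ * β) * r)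
        (α * δ * star (γ * β) * d) := by
  ext ⟨i, j⟩ ⟨k, l⟩
  simp only [localFilter_apply, xState]
  fin_cases i <;> fin_cases j <;> fin_cases k <;> fin_cases l <;>
    simp [idx4, Fintype.sum_prod_type, ← Complex.mul_conj] <;>
    ring

end ZeroCorner

section Separable

lemma Sep2.smul {σ : M4} (h : Sep2 σ) {c : ℝ} (hc : 0 ≤ c) : Sep2 (c • σ) := by
  obtain ⟨N, x, y, rfl⟩ := h
  refine ⟨N, fun k ↦ (√c : ℂ) • x k, y, ?_⟩
  simp only [pureMat_smul, Complex.normSq_ofReal, Real.mul_self_sqrt hc, smul_kronecker,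
    Finset.smul_sum]

lemma sep2_xState_zero {p q r : ℝ} (hp : 0 ≤ p) (hq : 0 ≤ q) (hr : 0 ≤ r) :
    Sep2 (xState p q r 0) := by
  have hsqrt {x : ℝ} (hx : 0 ≤ x) : (√x : ℂ) * √x = x := by
    rw [← Complex.ofReal_mul, Real.mul_self_sqrt hx]
  refine ⟨3, ![![√p, 0], ![√q, 0], ![0, √r]], ![![1, 0], ![0, 1], ![1, 0]], ?_⟩
  ext ⟨i, j⟩ ⟨k, l⟩
  simp only [Matrix.sum_apply, Fin.sum_univ_three, kroneckerMap_apply, pureMat, vecMulVec_apply,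
    Pi.star_apply]
  fin_cases i <;> fin_cases j <;> fin_cases k <;> fin_cases l <;>
    simp [xState, idx4, hsqrt hp, hsqrt hq, hsqrt hr]

lemma IsDensity.exists_sep2_sloccEquiv {ρ σ : M4} (hρ : IsDensity ρ) (hσ : Sep2 σ)
    (h : LocalEquiv ρ σ) : ∃ σ', IsDensity σ' ∧ Sep2 σ' ∧ SLOCCequiv ρ σ' := by
  obtain ⟨c, hc, hdensity, hequiv⟩ := hρ.exists_smul_of_localEquiv h
  exact ⟨c • σ, hdensity, hσ.smul hc.le, hequiv⟩

end Separable

section Coherent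

variable {p q r b : ℝ} {d : ℂ}

lemma exists_localEquiv_xState_balanced (hp : 0 ≤ p) (hq : 0 ≤ q) (hr : 0 ≤ r) (hd : d ≠ 0)
    (hdqr : ‖d‖ ^ 2 ≤ q * r) :
    ∃ p' b : ℝ, 0 ≤ p' ∧ 0 < b ∧ b ≤ 1 / 2 ∧
      LocalEquiv (xState p q r d) (xState p' (1 / 4) (1 / 4) (b / 2 : ℝ)) := by
  have hqr : 0 < q * r := lt_of_lt_of_le (by positivity) hdqr
  replace hq := hq.lt_of_ne' (left_ne_zero_of_mul hqr.ne')
  replace hr := hr.lt_of_ne' (right_ne_zero_of_mul hqr.ne')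
  obtain ⟨u, hu, hud⟩ := Complex.exists_norm_eq_mul_self d
  have hu₀ : u ≠ 0 := norm_ne_zero_iff.1 (hu.trans_ne one_ne_zero)
  have hle : ‖d‖ ≤ √q * √r := by
    rw [← Real.sqrt_mul hq.le]
    exact Real.le_sqrt_of_sq_le hdqr
  have hqC : (√q : ℂ) ≠ 0 := by exact_mod_cast (Real.sqrt_pos.2 hq).ne'
  have hrC : (√r : ℂ) ≠ 0 := by exact_mod_cast (Real.sqrt_pos.2 hr).ne'
  refine ⟨p / (16 * (q * r)), ‖d‖ / (2 * (√q * √r)), by positivity, by positivity, ?_, ?_⟩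
  · rw [div_le_div_iff₀ (by positivity) two_pos]
    linarith
  · convert localEquiv_localFilter (A := diagonal ![u / (2 * √q), 1])
      (B := diagonal ![1 / (2 * √r), 1]) (by simp [hu₀, hqC]) (by simp [hrC])
      (xState p q r d) using 1
    have hα : normSq (u / (2 * √q)) = 1 / (4 * q) := by
      norm_num [Complex.normSq_eq_norm_sq, hu, mul_pow, div_pow, hq.le]
    have hβ : normSq (1 / (2 * √r)) = 1 / (4 * r) := by
      norm_num [Complex.normSq_eq_norm_sq, mul_pow, div_pow, hr.le]
    rw [localFilter_diagonal_xState, map_mul, mul_one, one_mul, hα, hβ]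
    congr 1
    · field_simp
      norm_num
    · field_simp
    · field_simp
    · push_cast
      simp only [hud, star_div₀, star_one, star_mul', star_ofNat, star_def, Complex.conj_ofReal]
      field_simp

lemma localEquiv_xState_rhoND (hp : 0 < p) (b : ℝ) :
    LocalEquiv (xState p (1 / 4) (1 / 4) (b / 2 : ℝ)) (rhoND b) := by
  obtain ⟨t, ht, htp⟩ : ∃ t : ℝ, 0 < t ∧ t ^ 4 * p = 1 / 2 :=
    ⟨(1 / (2 * p)) ^ ((4 : ℕ)⁻¹ : ℝ), by positivity, by
      rw [Real.rpow_inv_natCast_pow (by positivity) (by norm_num)]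
      field_simp⟩
  have htC : (t : ℂ) ≠ 0 := by exact_mod_cast ht.ne'
  have hND : rhoND b = xState (1 / 2) (1 / 4) (1 / 4) (b / 2 : ℝ) := by
    ext ⟨i, j⟩ ⟨k, l⟩
    fin_cases i <;> fin_cases j <;> fin_cases k <;> fin_cases l <;>
      simp [rhoND, xState, idx4] <;> ring
  convert localEquiv_localFilter (A := diagonal ![(t : ℂ), (t : ℂ)⁻¹])
    (B := diagonal ![(t : ℂ), (t : ℂ)⁻¹]) (by simp [htC]) (by simp [htC]) _ using 1
  have htt : normSq ((t : ℂ) * t) = t ^ 4 := by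
    rw [← Complex.ofReal_mul, Complex.normSq_ofReal]
    ring
  simp [localFilter_diagonal_xState, hND, htC, htt, htp]

lemma localEquiv_xState_rhoBD (b : ℝ) :
    LocalEquiv (xState 0 (1 / 4) (1 / 4) (b / 2 : ℝ))
      (rhoBD ![1 / 4 + b / 2, 1 / 4 - b / 2, 0, 0]) := by
  have hsq : invSqrt2 * (starRingEnd ℂ) invSqrt2 = 1 / 2 := by
    rw [Complex.mul_conj, normSq_invSqrt2]
    norm_num
  convert localEquiv_localFilter (A := (1 : M2)) (B := !![0, 1; 1, 0]) (by simp) (by simp) _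
    using 1
  ext ⟨i, j⟩ ⟨k, l⟩
  simp only [localFilter_apply, rhoBD, BellProj, Fin.sum_univ_four, Matrix.add_apply,
    Matrix.smul_apply, vecMulVec_apply, Pi.star_apply]
  fin_cases i <;> fin_cases j <;> fin_cases k <;> fin_cases l <;>
    simp [xState, idx4, bell, Fintype.sum_prod_type, hsq, Matrix.one_apply] <;>
    ring

lemma IsDensity.exists_sloccEquiv_rhoBD_of_xState {ρ : M4} (hρ : IsDensity ρ) (hb₀ : 0 ≤ b)
    (hb : b ≤ 1 / 2) (h : LocalEquiv ρ (xState 0 (1 / 4) (1 / 4) (b / 2 : ℝ))) :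
    ∃ l, IsWeight l ∧ IsOrdered l ∧ SLOCCequiv ρ (rhoBD l) := by
  refine hρ.exists_sloccEquiv_rhoBD ?_ (h.trans (localEquiv_xState_rhoBD b))
  refine ⟨?_, ?_, le_rfl⟩ <;> simp <;> linarith

end Coherent

/-- every two-qubit density matrix is SLOCC equivalent to (1) an
ordered Bell-diagonal state, (2) a separable density matrix, or (3) `ρ_ND(b)` for
some `0 < b ≤ 1/2`. -/
theorem stmt15 (ρ : M4) (hρ : IsDensity ρ) :
    (∃ l : Fin 4 → ℝ, IsWeight l ∧ IsOrdered l ∧ SLOCCequiv ρ (rhoBD l)) ∨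
    (∃ σ : M4, IsDensity σ ∧ Sep2 σ ∧ SLOCCequiv ρ σ) ∨
    (∃ b : ℝ, 0 < b ∧ b ≤ 1 / 2 ∧ SLOCCequiv ρ (rhoND b)) := by
  by_cases hne : ∀ A B : M2, A ≠ 0 → B ≠ 0 → localFilter A B ρ ≠ 0
  · left
    obtain ⟨σ, hρσ, htr, hσ⟩ := exists_localEquiv_isExtremal hρ.1 hne
    have hherm := (hρσ.posSemidef hρ.1).isHermitian
    obtain ⟨l, hl, hσl⟩ := exists_localEquiv_rhoBD_of_traceRight_traceLeft hherm
      (hσ.traceRight_eq hherm htr) (hσ.traceLeft_eq hherm htr)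
    exact hρ.exists_sloccEquiv_rhoBD hl (hρσ.trans hσl)
  · push Not at hne
    obtain ⟨A, B, hA, hB, hAB⟩ := hne
    obtain ⟨σ, hρσ, hcorner⟩ := exists_localEquiv_apply_one_one_eq_zero hA hB hAB
    obtain ⟨p, q, r, d, hp, hq, hr, hdqr, hσX⟩ :=
      exists_localEquiv_xState (hρσ.posSemidef hρ.1) hcorner
    have hρX := hρσ.trans hσX
    rcases eq_or_ne d 0 with rfl | hd
    · exact .inr (.inl (hρ.exists_sep2_sloccEquiv (sep2_xState_zero hp hq hr) hρX))
    obtain ⟨p', b, hp', hb₀, hb, hbal⟩ := exists_localEquiv_xState_balanced hp hq hr hd hdqr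
    have hρbal := hρX.trans hbal
    rcases hp'.eq_or_lt with rfl | hp'
    · exact .inl (hρ.exists_sloccEquiv_rhoBD_of_xState hb₀.le hb hρbal)
    · exact .inr (.inr ⟨b, hb₀, hb, (hρbal.trans (localEquiv_xState_rhoND hp' b)).sloccEquiv⟩)

end Paper
end
end

section
/- Fix 0 < b ≤ 1/2 and set ρ_ND = (1/4)·[[2,0,0,0],[0,1,2b,0],[0,2b,1,0],[0,0,0,0]] and ρ'_ND = (1/2)·[[0,0,0,0],[0,1,−2b,0],[0,−2b,1,0],[0,0,0,0]] (both in the product basis |00⟩,|01⟩,|10⟩,|11⟩). Define the 2×2 matrices A_1 = [[−2b+√(1+4b²), −1/2],[1,0]], B_1 = [[1,1/2],[1,0]], A_2 = [[2b−√(1+4b²), 1/2],[1,0]], B_2 = [[1,1/2],[−1,0]]. Then there exists a real c > 0 such that c·Σ_{i=1}^2 (A_i⊗B_i) ρ'_ND (A_i⊗B_i)† = ρ_ND; i.e. the Bell-diagonal state ρ'_ND can be transformed back to ρ_ND by a two-term separable map. -/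
open Matrix Complex
open scoped Kronecker ComplexOrder

noncomputable section
namespace Paper

/-- The Kraus operators of the separable map converting `ρ'_ND(b)` back to `ρ_ND(b)`. -/
def KA1 (b : ℝ) : Matrix (Fin 2) (Fin 2) ℂ :=
  !![((-2 * b + Real.sqrt (1 + 4 * b ^ 2) : ℝ) : ℂ), -1 / 2; 1, 0]

def KB1 : Matrix (Fin 2) (Fin 2) ℂ := !![1, 1 / 2; 1, 0]

def KA2 (b : ℝ) : Matrix (Fin 2) (Fin 2) ℂ :=
  !![((2 * b - Real.sqrt (1 + 4 * b ^ 2) : ℝ) : ℂ), 1 / 2; 1, 0]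

def KB2 : Matrix (Fin 2) (Fin 2) ℂ := !![1, 1 / 2; -1, 0]

/-!
Since `A₂ = -σ_z A₁` and `B₂ = σ_z B₁`, the second Kraus term is the first one conjugated by
`σ_z ⊗ σ_z`. Adding the two therefore doubles the entries of the first term between basis vectors of
equal parity and cancels the others. The surviving entries are those of `ρ_ND` exactly when
the corner entry `a` of `A₁` solves `a² + 4ba = 1`, and `√(1 + 4b²) - 2b` is the positive root of
this equation.
-/

section Conjugation

variable {l m n R : Type*} [Fintype n]

theorem conj_neg_mul_mul [Fintype m] [Ring R] [StarRing R] (U : Matrix l m R) (K : Matrix m n R)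
    (M : Matrix n n R) :
    -(U * K) * M * (-(U * K))ᴴ = U * (K * M * Kᴴ) * Uᴴ := by
  simp only [conjTranspose_neg, conjTranspose_mul, Matrix.neg_mul, Matrix.mul_neg, neg_neg,
    Matrix.mul_assoc]

theorem add_conj_diagonal_apply [DecidableEq n] [CommSemiring R] [StarRing R] (d : n → R)
    (M : Matrix n n R) (i j : n) :
    (M + diagonal d * M * (diagonal d)ᴴ) i j = (1 + d i * star (d j)) * M i j := by
  rw [diagonal_conjTranspose, Matrix.add_apply, mul_diagonal, diagonal_mul, Pi.star_apply]
  ring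

theorem conj_single_one_apply [DecidableEq n] [Semiring R] [StarRing R] (K : Matrix m n R)
    (p q : n) (i j : m) : (K * single p q (1 : R) * Kᴴ) i j = K i p * star (K j q) := by
  rw [single_eq_single_vecMulVec_single, mul_vecMulVec, vecMulVec_mul, mulVec_single_one,
    single_one_vecMul]
  rfl

end Conjugation

theorem pauliZ_kronecker_pauliZ :
    pauli 2 ⊗ₖ pauli 2 = diagonal fun p : Q2 => if p.1 = p.2 then (1 : ℂ) else -1 := by
  have pauliZ_eq_diagonal : pauli 2 = diagonal ![1, -1] := by
    ext i j
    fin_cases i <;> fin_cases j <;> rfl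
  rw [pauliZ_eq_diagonal, diagonal_kronecker_diagonal]
  congr 1
  ext ⟨i, j⟩
  fin_cases i <;> fin_cases j <;> simp

theorem add_conj_pauliZ_kronecker_pauliZ_apply (M : M4) (p q : Q2) :
    (M + (pauli 2 ⊗ₖ pauli 2) * M * (pauli 2 ⊗ₖ pauli 2)ᴴ) p q =
      if (p.1 = p.2 ↔ q.1 = q.2) then 2 * M p q else 0 := by
  rw [pauliZ_kronecker_pauliZ, add_conj_diagonal_apply]
  by_cases hp : p.1 = p.2 <;> by_cases hq : q.1 = q.2 <;> simp [hp, hq, one_add_one_eq_two]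

theorem KA2_eq_neg_pauliZ_mul_KA1 (b : ℝ) : KA2 b = -(pauli 2 * KA1 b) := by
  ext i j
  fin_cases i <;> fin_cases j <;> simp [KA1, KA2, pauli, neg_div, sub_eq_add_neg, add_comm]

theorem KB2_eq_pauliZ_mul_KB1 : KB2 = pauli 2 * KB1 := by
  ext i j
  fin_cases i <;> fin_cases j <;> simp [KB1, KB2, pauli]

theorem KA2_kronecker_KB2 (b : ℝ) :
    KA2 b ⊗ₖ KB2 = -((pauli 2 ⊗ₖ pauli 2) * (KA1 b ⊗ₖ KB1)) := by
  rw [KA2_eq_neg_pauliZ_mul_KA1, KB2_eq_pauliZ_mul_KB1, ← mul_kronecker_mul]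
  ext
  simp only [kroneckerMap_apply, Matrix.neg_apply, neg_mul]

theorem rhoND'_eq_single (b : ℝ) :
    rhoND' b = (1 / 2 : ℂ) • (single (0, 1) (0, 1) 1 + single (1, 0) (1, 0) 1 -
      (2 * b : ℂ) • (single (0, 1) (1, 0) 1 + single (1, 0) (0, 1) 1)) := by
  ext ⟨i, j⟩ ⟨k, l⟩
  fin_cases i <;> fin_cases j <;> fin_cases k <;> fin_cases l <;> simp [rhoND', idx4, single]

theorem conj_rhoND'_apply {m : Type*} (K : Matrix m Q2 ℂ) (b : ℝ) (i j : m) :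
    (K * rhoND' b * Kᴴ) i j =
      1 / 2 * (K i (0, 1) * star (K j (0, 1)) + K i (1, 0) * star (K j (1, 0)) -
        2 * b * (K i (0, 1) * star (K j (1, 0)) + K i (1, 0) * star (K j (0, 1)))) := by
  simp only [rhoND'_eq_single, Matrix.mul_smul, Matrix.smul_mul, Matrix.mul_add, Matrix.add_mul,
    Matrix.mul_sub, Matrix.sub_mul, Matrix.smul_apply, Matrix.add_apply, Matrix.sub_apply,
    conj_single_one_apply, smul_eq_mul]

theorem conj_kronecker_KB1_rhoND'_apply (a b : ℝ) (p q : Q2) :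
    ((!![(a : ℂ), -1 / 2; 1, 0] ⊗ₖ KB1) * rhoND' b * (!![(a : ℂ), -1 / 2; 1, 0] ⊗ₖ KB1)ᴴ) p q =
      (1 / 8 : ℂ) *
        (!![a ^ 2 + 4 * b * a + 1, 1 + 2 * a * b, a + 2 * b, 0;
            1 + 2 * a * b, 1, 2 * b, 0;
            a + 2 * b, 2 * b, 1, 0;
            0, 0, 0, 0] (idx4 p) (idx4 q) : ℝ) := by
  rw [conj_rhoND'_apply]
  obtain ⟨i, j⟩ := p
  obtain ⟨k, l⟩ := q
  fin_cases i <;> fin_cases j <;> fin_cases k <;> fin_cases l <;> simp [KB1, idx4] <;> ring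

theorem KA1_corner_sq_add_four_mul (b : ℝ) :
    (-2 * b + √(1 + 4 * b ^ 2)) ^ 2 + 4 * b * (-2 * b + √(1 + 4 * b ^ 2)) = 1 := by
  have sq_sqrt_radicand : √(1 + 4 * b ^ 2) ^ 2 = 1 + 4 * b ^ 2 := Real.sq_sqrt (by positivity)
  linear_combination sq_sqrt_radicand

theorem stmt16_general (b : ℝ) :
    (KA1 b ⊗ₖ KB1) * rhoND' b * (KA1 b ⊗ₖ KB1)ᴴ +
      (KA2 b ⊗ₖ KB2) * rhoND' b * (KA2 b ⊗ₖ KB2)ᴴ = rhoND b := by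
  rw [KA2_kronecker_KB2, conj_neg_mul_mul]
  ext ⟨i, j⟩ ⟨k, l⟩
  rw [add_conj_pauliZ_kronecker_pauliZ_apply, KA1, conj_kronecker_KB1_rhoND'_apply,
    KA1_corner_sq_add_four_mul, one_add_one_eq_two]
  fin_cases i <;> fin_cases j <;> fin_cases k <;> fin_cases l <;> simp [rhoND, idx4] <;> ring

/-- for `0 < b ≤ 1/2` there is a `c > 0` with
`c·Σ_{i=1}^2 (A_i⊗B_i) ρ'_ND (A_i⊗B_i)† = ρ_ND`: the Bell-diagonal state `ρ'_ND`
can be transformed back to `ρ_ND` by a two-term separable map. -/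
theorem stmt16 (b : ℝ) (hb0 : 0 < b) (hb : b ≤ 1 / 2) :
    ∃ c : ℝ, 0 < c ∧
      (c : ℂ) •
          ((KA1 b ⊗ₖ KB1) * rhoND' b * (KA1 b ⊗ₖ KB1)ᴴ +
            (KA2 b ⊗ₖ KB2) * rhoND' b * (KA2 b ⊗ₖ KB2)ᴴ) = rhoND b := by
  exact ⟨1, one_pos, by rw [ofReal_one, one_smul, stmt16_general]⟩

end Paper
end
end

section
/- Let ρ and ρ' be two-qubit density matrices, and let λ and λ' be ordered weight vectors such that: if ρ is entangled then ρ is SLOCC equivalent to ρ_BD(λ), and if ρ' is entangled then ρ' is SLOCC equivalent to ρ_BD(λ'). Then ρ can be transformed to ρ' by SLOCC if and only if either (1) ρ' is separable, or (2) ρ and ρ' are both entangled and λ1 ≥ λ1', (1−2λ2)·(λ3'+λ4') ≥ (1−2λ2')·(λ3+λ4), and (1−2λ2−2λ3)·λ4' ≥ (1−2λ2'−2λ3')·λ4. -/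
open Matrix Complex
open scoped Kronecker ComplexOrder

noncomputable section
namespace Paper

/-! In the magic basis a local operator `A ⊗ B` becomes `√(det A det B)` times a complex orthogonal
matrix `O`, and it changes the Bell weights by the matrix of the `|Oⱼᵢ|²`. Orthogonality bounds
these entries: the concurrence `λ₁ - λ₂ - λ₃ - λ₄` grows at most by the factor `|det A det B|`, and
each of `λ₂ + λ₃ + λ₄`, `λ₃ + λ₄` and `λ₄` grows at least by that factor. Their ratios are the `Eᵢ`
up to monotone reparametrization, and since all four quantities are linear in the weights, the
comparison survives sums over Kraus operators.

Conversely, local unitaries permute the Bell states, so the weights reachable at a given concurrence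
form a convex set that is stable under permutations of `λ₂, λ₃, λ₄`; mixing in the separable states
`Π₁ + Πᵢ` raises `λᵢ` without changing the concurrence. By weak majorization such a set contains
every ordered tail whose partial sums dominate those of one of its members. -/

/-! ### Complex-orthogonal pairs of vectors -/

section OrthogonalPairs

variable {ι : Type*} [Fintype ι] {u v : ι → ℂ}

lemma norm_sum_mul_self_le {κ : Type*} (s : Finset κ) (a : κ → ℂ) :
    ‖∑ j ∈ s, a j * a j‖ ≤ ∑ j ∈ s, ‖a j‖ ^ 2 := by
  simpa only [norm_mul, ← sq (‖_‖)] using norm_sum_le s fun j => a j * a j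

lemma two_mul_norm_sq_le (u : ι → ℂ) (i : ι) :
    2 * ‖u i‖ ^ 2 ≤ ∑ j, ‖u j‖ ^ 2 + ‖u ⬝ᵥ u‖ := by
  classical
  have split_dot := Finset.add_sum_erase Finset.univ (fun j => u j * u j) (Finset.mem_univ i)
  have split_norm := Finset.add_sum_erase Finset.univ (fun j => ‖u j‖ ^ 2) (Finset.mem_univ i)
  have rest_le := norm_sum_mul_self_le (Finset.univ.erase i) u
  have entry_le : ‖u i‖ ^ 2 ≤ ‖u ⬝ᵥ u‖ + ‖∑ j ∈ Finset.univ.erase i, u j * u j‖ := by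
    rw [sq, ← norm_mul, eq_sub_of_add_eq split_dot]
    exact norm_sub_le _ _
  linarith

lemma two_mul_norm_sq_add_norm_sq_le (hself : u ⬝ᵥ u = v ⬝ᵥ v) (hcross : u ⬝ᵥ v = 0) (i : ι) :
    2 * (‖u i‖ ^ 2 + ‖v i‖ ^ 2) ≤ ∑ j, (‖u j‖ ^ 2 + ‖v j‖ ^ 2) := by
  have hcross' : v ⬝ᵥ u = 0 := by rw [dotProduct_comm, hcross]
  have isotropic_add : (u + I • v) ⬝ᵥ (u + I • v) = 0 := by
    simp [hself, hcross, hcross', ← mul_assoc]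
  have isotropic_sub : (u - I • v) ⬝ᵥ (u - I • v) = 0 := by
    simp [hself, hcross, hcross', ← mul_assoc]
  have parallelogram (j : ι) : ‖(u + I • v) j‖ ^ 2 + ‖(u - I • v) j‖ ^ 2
      = 2 * (‖u j‖ ^ 2 + ‖v j‖ ^ 2) := by
    simpa [← sq] using parallelogram_law_with_norm ℝ (u j) (I * v j)
  have hadd := two_mul_norm_sq_le (u + I • v) i
  have hsub := two_mul_norm_sq_le (u - I • v) i
  have total : ∑ j, ‖(u + I • v) j‖ ^ 2 + ∑ j, ‖(u - I • v) j‖ ^ 2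
      = 2 * ∑ j, (‖u j‖ ^ 2 + ‖v j‖ ^ 2) := by
    rw [← Finset.sum_add_distrib, Finset.mul_sum]
    exact Finset.sum_congr rfl fun j _ => parallelogram j
  rw [isotropic_add, norm_zero] at hadd
  rw [isotropic_sub, norm_zero] at hsub
  linarith [parallelogram i]

lemma norm_sum_mul_sq_le {κ : Type*} (s : Finset κ) (a b : κ → ℂ) :
    ‖∑ j ∈ s, a j * b j‖ ^ 2 ≤ (∑ j ∈ s, ‖a j‖ ^ 2) * ∑ j ∈ s, ‖b j‖ ^ 2 := by
  have triangle : ‖∑ j ∈ s, a j * b j‖ ≤ ∑ j ∈ s, ‖a j‖ * ‖b j‖ := by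
    simpa only [norm_mul] using norm_sum_le s fun j => a j * b j
  exact (pow_le_pow_left₀ (norm_nonneg _) triangle 2).trans (Finset.sum_mul_sq_le_sq_mul_sq s _ _)

-- The combination `w = v i • u - u i • v` vanishes at `i`, so Cauchy–Schwarz for `u ⬝ᵥ w` and
-- `v ⬝ᵥ w` only sees the coordinates other than `i`.
lemma norm_dotProduct_self_sq_mul_le (hself : u ⬝ᵥ u = v ⬝ᵥ v) (hcross : u ⬝ᵥ v = 0) (s : Finset ι)
    (i : ι) (hs : ∀ j ∉ s, j = i) :
    ‖u ⬝ᵥ u‖ ^ 2 * (‖u i‖ ^ 2 + ‖v i‖ ^ 2) ≤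
      (∑ j ∈ s, (‖u j‖ ^ 2 + ‖v j‖ ^ 2)) ^ 2 * (‖u i‖ ^ 2 + ‖v i‖ ^ 2) := by
  set F := ∑ j ∈ s, (‖u j‖ ^ 2 + ‖v j‖ ^ 2) with hF
  set w : ι → ℂ := v i • u - u i • v with hw
  have dot_eq (a : ι → ℂ) : ∑ j ∈ s, a j * w j = a ⬝ᵥ w :=
    Finset.sum_subset (Finset.subset_univ s) fun j _ hj => by simp [hw, hs j hj, mul_comm]
  have norm_u_dot := norm_sum_mul_sq_le s u w
  have norm_v_dot := norm_sum_mul_sq_le s v w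
  rw [dot_eq] at norm_u_dot norm_v_dot
  have u_dot : u ⬝ᵥ w = v i * (u ⬝ᵥ u) := by simp [hw, hcross]
  have v_dot : v ⬝ᵥ w = -(u i * (u ⬝ᵥ u)) := by simp [hw, dotProduct_comm v u, hcross, hself]
  rw [u_dot, norm_mul, mul_pow] at norm_u_dot
  rw [v_dot, norm_neg, norm_mul, mul_pow] at norm_v_dot
  have norm_w (j : ι) : ‖w j‖ ^ 2 ≤ (‖u i‖ ^ 2 + ‖v i‖ ^ 2) * (‖u j‖ ^ 2 + ‖v j‖ ^ 2) := by
    simpa [hw, sub_eq_add_neg, add_comm] using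
      norm_sum_mul_sq_le Finset.univ ![v i, -u i] ![u j, v j]
  have sum_norm_w : ∑ j ∈ s, ‖w j‖ ^ 2 ≤ (‖u i‖ ^ 2 + ‖v i‖ ^ 2) * F := by
    rw [hF, Finset.mul_sum]
    exact Finset.sum_le_sum fun j _ => norm_w j
  have hFnonneg : 0 ≤ F := Finset.sum_nonneg fun j _ => by positivity
  calc ‖u ⬝ᵥ u‖ ^ 2 * (‖u i‖ ^ 2 + ‖v i‖ ^ 2) ≤ F * ∑ j ∈ s, ‖w j‖ ^ 2 := by
        rw [hF, Finset.sum_add_distrib]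
        linarith
    _ ≤ F * ((‖u i‖ ^ 2 + ‖v i‖ ^ 2) * F) := mul_le_mul_of_nonneg_left sum_norm_w hFnonneg
    _ = F ^ 2 * (‖u i‖ ^ 2 + ‖v i‖ ^ 2) := by ring

lemma norm_sq_add_norm_sq_add_norm_dotProduct_le (hself : u ⬝ᵥ u = v ⬝ᵥ v) (hcross : u ⬝ᵥ v = 0)
    (i : ι) :
    ‖u i‖ ^ 2 + ‖v i‖ ^ 2 + ‖u ⬝ᵥ u‖ ≤ ∑ j, (‖u j‖ ^ 2 + ‖v j‖ ^ 2) := by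
  classical
  have split := Finset.add_sum_erase Finset.univ (fun j => ‖u j‖ ^ 2 + ‖v j‖ ^ 2)
    (Finset.mem_univ i)
  have rest_nonneg : 0 ≤ ∑ j ∈ Finset.univ.erase i, (‖u j‖ ^ 2 + ‖v j‖ ^ 2) :=
    Finset.sum_nonneg fun j _ => by positivity
  suffices ‖u ⬝ᵥ u‖ ≤ ∑ j ∈ Finset.univ.erase i, (‖u j‖ ^ 2 + ‖v j‖ ^ 2) by linarith
  rcases (by positivity : 0 ≤ ‖u i‖ ^ 2 + ‖v i‖ ^ 2).eq_or_lt with hzero | hpos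
  · have self_le : ‖u ⬝ᵥ u‖ ≤ ∑ j, ‖u j‖ ^ 2 := norm_sum_mul_self_le Finset.univ u
    have : ∑ j, ‖u j‖ ^ 2 ≤ ∑ j, (‖u j‖ ^ 2 + ‖v j‖ ^ 2) :=
      Finset.sum_le_sum fun j _ => le_add_of_nonneg_right (sq_nonneg _)
    linarith
  · refine le_of_sq_le_sq ?_ rest_nonneg
    exact le_of_mul_le_mul_right
      (norm_dotProduct_self_sq_mul_le hself hcross _ i (by simp)) hpos

end OrthogonalPairs

/-! ### Weak majorization -/

section WeakMajorization

variable {n : ℕ}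

lemma sum_Ici_succ {M : Type*} [AddCommMonoid M] (f : Fin (n + 1) → M) (k : Fin n) :
    ∑ i ∈ Finset.Ici k.succ, f i = ∑ i ∈ Finset.Ici k, f i.succ := by
  simp [← Fin.map_succEmb_Ici, Finset.sum_map]

lemma sum_mul_le_sum_mul_of_sum_Ici_le {b w x : Fin n → ℝ} (hb : Monotone b) (hb0 : ∀ i, 0 ≤ b i)
    (hwx : ∀ k, ∑ i ∈ Finset.Ici k, w i ≤ ∑ i ∈ Finset.Ici k, x i) :
    ∑ i, b i * w i ≤ ∑ i, b i * x i := by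
  induction n with
  | zero => simp
  | succ n ih =>
    have peel (y : Fin (n + 1) → ℝ) :
        ∑ i, b i * y i = b 0 * ∑ i, y i + ∑ i : Fin n, (b i.succ - b 0) * y i.succ := by
      simp only [Fin.sum_univ_succ, sub_mul, Finset.sum_sub_distrib, ← Finset.mul_sum]
      ring
    have total : ∑ i, w i ≤ ∑ i, x i := by simpa [← bot_eq_zero'] using hwx 0
    rw [peel, peel]
    refine add_le_add (mul_le_mul_of_nonneg_left total (hb0 0)) (ih ?_ ?_ ?_)
    · exact fun i j hij => sub_le_sub_right (hb (Fin.succ_le_succ_iff.2 hij)) _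
    · exact fun i => sub_nonneg.2 (hb (Fin.zero_le _))
    · intro k
      simpa only [sum_Ici_succ] using hwx k.succ

lemma exists_perm_sum_mul_comp_le {a w x : Fin n → ℝ} (ha : ∀ i, 0 ≤ a i) (hx : Antitone x)
    (hwx : ∀ k, ∑ i ∈ Finset.Ici k, w i ≤ ∑ i ∈ Finset.Ici k, x i) :
    ∃ π : Equiv.Perm (Fin n), ∑ i, a i * w (π i) ≤ ∑ i, a i * x i := by
  let σ := Tuple.sort a
  have hσ : Monotone (a ∘ σ) := Tuple.monotone_sort a
  refine ⟨σ⁻¹, ?_⟩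
  calc ∑ i, a i * w (σ⁻¹ i) = ∑ i, a (σ i) * w i := by
        rw [← Equiv.sum_comp σ]; simp
    _ ≤ ∑ i, a (σ i) * x i := sum_mul_le_sum_mul_of_sum_Ici_le hσ (fun i => ha _) hwx
    _ ≤ ∑ i, a (σ (σ⁻¹ i)) * x i := (hσ.antivary hx).sum_mul_le_sum_comp_perm_mul
    _ = ∑ i, a i * x i := by simp

open scoped Pointwise in
-- If no such `y` existed, a linear functional would separate `x` from the closed convex set
-- `convexHull {w ∘ π} + [0, ∞)ⁿ`; its coefficients are nonnegative, contradicting the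
-- rearrangement inequality.
lemma exists_le_mem_convexHull_perm {w x : Fin n → ℝ} (hx : Antitone x)
    (hwx : ∀ k, ∑ i ∈ Finset.Ici k, w i ≤ ∑ i ∈ Finset.Ici k, x i) :
    ∃ y ∈ convexHull ℝ (Set.range fun π : Equiv.Perm (Fin n) => w ∘ π), y ≤ x := by
  set P := convexHull ℝ (Set.range fun π : Equiv.Perm (Fin n) => w ∘ π)
  have perm_mem (π : Equiv.Perm (Fin n)) : w ∘ π ∈ P := subset_convexHull ℝ _ ⟨π, rfl⟩
  suffices hmem : x ∈ P + Set.Ici 0 by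
    obtain ⟨y, hy, z, hz, rfl⟩ := hmem
    exact ⟨y, hy, le_add_of_nonneg_right hz⟩
  by_contra hnot
  have hconvex : Convex ℝ (P + Set.Ici 0) := (convex_convexHull ℝ _).add (convex_Ici 0)
  have hclosed : IsClosed (P + Set.Ici 0) :=
    isClosed_Ici.add_left_of_isCompact ((Set.finite_range _).isCompact_convexHull ℝ)
  obtain ⟨f, c, hfx, hfc⟩ := geometric_hahn_banach_point_closed hconvex hclosed hnot
  set a : Fin n → ℝ := fun i => f (Pi.single i 1) with ha
  have f_eq (y : Fin n → ℝ) : f y = ∑ i, a i * y i := by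
    conv_lhs => rw [pi_eq_sum_univ' y]
    simp [ha, mul_comm]
  have a_nonneg (i : Fin n) : 0 ≤ a i := by
    by_contra! hneg
    have shifted (t : ℝ) (ht : 0 ≤ t) : c < f w + t * a i := by
      simpa [ha] using hfc _ (Set.add_mem_add (perm_mem 1)
        (Set.mem_Ici.2 (smul_nonneg ht (Pi.single_nonneg.2 (zero_le_one' ℝ) : 0 ≤ Pi.single i 1))))
    have base : c < f w := by simpa using shifted 0 le_rfl
    have reached := shifted ((c - f w) / a i) (div_nonneg_of_nonpos (sub_nonpos.2 base.le) hneg.le)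
    rw [div_mul_cancel₀ _ hneg.ne] at reached
    linarith
  obtain ⟨π, hπ⟩ := exists_perm_sum_mul_comp_le a_nonneg hx hwx
  have above : c < f (w ∘ π) := by
    simpa using hfc _ (Set.add_mem_add (perm_mem π) (Set.mem_Ici.2 le_rfl))
  rw [f_eq] at above hfx
  exact absurd (above.trans_le hπ) hfx.not_gt

lemma mem_of_sum_Ici_le {G : Set (Fin n → ℝ)} (hconvex : Convex ℝ G) (hupper : IsUpperSet G)
    (hperm : ∀ π : Equiv.Perm (Fin n), ∀ y ∈ G, y ∘ π ∈ G) {w x : Fin n → ℝ} (hx : Antitone x)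
    (hwx : ∀ k, ∑ i ∈ Finset.Ici k, w i ≤ ∑ i ∈ Finset.Ici k, x i) (hw : w ∈ G) : x ∈ G := by
  obtain ⟨y, hy, hyx⟩ := exists_le_mem_convexHull_perm hx hwx
  refine hupper hyx (convexHull_min ?_ hconvex hy)
  rintro _ ⟨π, rfl⟩
  exact hperm π w hw

end WeakMajorization

/-! ### Complex-conformal matrices and the monotones -/

/-- A square matrix that is `√D` times a complex orthogonal matrix. Both products are required, so
that the notion remains meaningful on rows and on columns when `D = 0`. -/
structure IsComplexConformal {n : Type*} [Fintype n] [DecidableEq n] (O : Matrix n n ℂ) (D : ℂ) :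
    Prop where
  mul_transpose : O * Oᵀ = D • 1
  transpose_mul : Oᵀ * O = D • 1

namespace IsComplexConformal

variable {n : Type*} [Fintype n] [DecidableEq n] {O : Matrix n n ℂ} {D : ℂ}

lemma transpose (h : IsComplexConformal O D) : IsComplexConformal Oᵀ D where
  mul_transpose := by rw [transpose_transpose, h.transpose_mul]
  transpose_mul := by rw [transpose_transpose, h.mul_transpose]

lemma row_dotProduct_row_self (h : IsComplexConformal O D) (j : n) : O.row j ⬝ᵥ O.row j = D := by
  simpa [mul_apply, dotProduct] using congrFun₂ h.mul_transpose j j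

lemma row_dotProduct_row_of_ne (h : IsComplexConformal O D) {j k : n} (hjk : j ≠ k) :
    O.row j ⬝ᵥ O.row k = 0 := by
  simpa [mul_apply, dotProduct, hjk] using congrFun₂ h.mul_transpose j k

lemma norm_le_sum_row (h : IsComplexConformal O D) (j : n) : ‖D‖ ≤ ∑ i, ‖O j i‖ ^ 2 := by
  rw [← h.row_dotProduct_row_self j]
  exact norm_sum_mul_self_le Finset.univ (O.row j)

lemma two_mul_norm_sq_le_sum_row (h : IsComplexConformal O D) (j i : n) :
    2 * ‖O j i‖ ^ 2 ≤ ∑ k, ‖O j k‖ ^ 2 + ‖D‖ := by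
  simpa only [h.row_dotProduct_row_self j, row_apply] using two_mul_norm_sq_le (O.row j) i

lemma two_mul_norm_sq_add_norm_sq_le_sum_rows (h : IsComplexConformal O D) {j k : n} (hjk : j ≠ k)
    (i : n) :
    2 * (‖O j i‖ ^ 2 + ‖O k i‖ ^ 2) ≤ ∑ m, (‖O j m‖ ^ 2 + ‖O k m‖ ^ 2) :=
  two_mul_norm_sq_add_norm_sq_le
    ((h.row_dotProduct_row_self j).trans (h.row_dotProduct_row_self k).symm)
    (h.row_dotProduct_row_of_ne hjk) i

lemma norm_sq_add_norm_sq_add_norm_le_sum_rows (h : IsComplexConformal O D) {j k : n} (hjk : j ≠ k)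
    (i : n) :
    ‖O j i‖ ^ 2 + ‖O k i‖ ^ 2 + ‖D‖ ≤ ∑ m, (‖O j m‖ ^ 2 + ‖O k m‖ ^ 2) := by
  simpa only [h.row_dotProduct_row_self j, row_apply] using
    norm_sq_add_norm_sq_add_norm_dotProduct_le
      ((h.row_dotProduct_row_self j).trans (h.row_dotProduct_row_self k).symm)
      (h.row_dotProduct_row_of_ne hjk) i

end IsComplexConformal

/-- The quantity `λ₁ - λ₂ - λ₃ - λ₄`, which for ordered weights is the concurrence of the
Bell-diagonal state whenever it is nonnegative. For weights of sum `1` it equals `2λ₁ - 1`; the form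
chosen here is linear in the weights. -/
def concurrence (l : Fin 4 → ℝ) : ℝ := l 0 - ∑ i : Fin 3, l i.succ

/-- The sum of the weights from position `k` on, the largest weight being left out: for
`k = 0, 1, 2` these are `λ₂ + λ₃ + λ₄`, `λ₃ + λ₄` and `λ₄`. -/
def tailSum (k : Fin 3) (l : Fin 4 → ℝ) : ℝ := ∑ i ∈ Finset.Ici k, l i.succ

/-- The order on weights given by the three monotones: `E₂` and `E₃` exceed the ratio of the
concurrence to the tail sum by `2`, and `E₁` is an increasing function of that ratio. The ratios are
compared in cross-multiplied form. -/
def MonotonesLE (l' l : Fin 4 → ℝ) : Prop :=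
  ∀ k, concurrence l' * tailSum k l ≤ concurrence l * tailSum k l'

lemma tailSum_zero (l : Fin 4 → ℝ) : tailSum 0 l = l 1 + l 2 + l 3 := by
  simp [tailSum, Fin.sum_univ_succ, add_assoc]

lemma tailSum_one (l : Fin 4 → ℝ) : tailSum 1 l = l 2 + l 3 := by
  rw [tailSum, show Finset.Ici (1 : Fin 3) = {1, 2} by decide]
  simp

lemma tailSum_two (l : Fin 4 → ℝ) : tailSum 2 l = l 3 := by
  rw [tailSum, show Finset.Ici (2 : Fin 3) = {2} by decide]
  simp

lemma concurrence_eq (l : Fin 4 → ℝ) : concurrence l = l 0 - l 1 - l 2 - l 3 := by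
  simp [concurrence, Fin.sum_univ_succ]
  ring

lemma MonotonesLE.add {l₁ l₂ l : Fin 4 → ℝ} (h₁ : MonotonesLE l₁ l) (h₂ : MonotonesLE l₂ l) :
    MonotonesLE (l₁ + l₂) l := by
  intro k
  have concurrence_add : concurrence (l₁ + l₂) = concurrence l₁ + concurrence l₂ := by
    simp only [concurrence_eq, Pi.add_apply]
    ring
  have tailSum_add : tailSum k (l₁ + l₂) = tailSum k l₁ + tailSum k l₂ := Finset.sum_add_distrib
  rw [concurrence_add, tailSum_add, add_mul, mul_add]
  exact add_le_add (h₁ k) (h₂ k)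

lemma MonotonesLE.smul {l' l : Fin 4 → ℝ} {r : ℝ} (hr : 0 ≤ r) (h : MonotonesLE l' l) :
    MonotonesLE (r • l') l := by
  intro k
  have concurrence_smul : concurrence (r • l') = r * concurrence l' := by
    simp only [concurrence_eq, Pi.smul_apply, smul_eq_mul]
    ring
  have tailSum_smul : tailSum k (r • l') = r * tailSum k l' := (Finset.mul_sum ..).symm
  rw [concurrence_smul, tailSum_smul, mul_assoc, mul_left_comm (concurrence l)]
  exact mul_le_mul_of_nonneg_left (h k) hr

lemma monotonesLE_iff {l l' : Fin 4 → ℝ} (hl : ∑ i, l i = 1) (hl' : ∑ i, l' i = 1) :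
    MonotonesLE l' l ↔
      l' 0 ≤ l 0 ∧
      (1 - 2 * l' 1) * (l 2 + l 3) ≤ (1 - 2 * l 1) * (l' 2 + l' 3) ∧
      (1 - 2 * l' 1 - 2 * l' 2) * l 3 ≤ (1 - 2 * l 1 - 2 * l 2) * l' 3 := by
  rw [Fin.sum_univ_four] at hl hl'
  have hl0 : l 0 = 1 - l 1 - l 2 - l 3 := by linarith
  have hl0' : l' 0 = 1 - l' 1 - l' 2 - l' 3 := by linarith
  simp only [MonotonesLE, Fin.forall_fin_succ, Fin.succ_zero_eq_one, Fin.succ_one_eq_two,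
    IsEmpty.forall_iff, and_true, tailSum_zero, tailSum_one, tailSum_two, concurrence_eq, hl0, hl0']
  refine and_congr ?_ (and_congr ?_ ?_) <;> constructor <;> intro h <;> linarith

section Conformal

variable {O : Matrix (Fin 4) (Fin 4) ℂ} {D : ℂ} {l : Fin 4 → ℝ}

lemma concurrence_mulVec_le (hO : IsComplexConformal O D) (hl : ∀ i, 0 ≤ l i)
    (hconc : 0 ≤ concurrence l) :
    concurrence (O.map (‖·‖ ^ 2) *ᵥ l) ≤ ‖D‖ * concurrence l := by
  set c : Fin 4 → ℝ := fun i => concurrence fun j => ‖O j i‖ ^ 2 with hc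
  have lead : c 0 ≤ ‖D‖ := by
    have := hO.transpose.two_mul_norm_sq_le_sum_row 0 0
    simp only [transpose_apply, Fin.sum_univ_four] at this
    simp only [hc, concurrence_eq]
    linarith
  have pair (i : Fin 3) : c 0 + c i.succ ≤ 0 := by
    have := hO.transpose.two_mul_norm_sq_add_norm_sq_le_sum_rows (Fin.succ_ne_zero i).symm 0
    simp only [transpose_apply, Fin.sum_univ_four] at this
    simp only [hc, concurrence_eq]
    linarith
  calc concurrence (O.map (‖·‖ ^ 2) *ᵥ l)
      = c 0 * concurrence l + ∑ i : Fin 3, (c 0 + c i.succ) * l i.succ := by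
        simp [hc, concurrence_eq, mulVec, dotProduct, Fin.sum_univ_succ]
        ring
    _ ≤ ‖D‖ * concurrence l + 0 :=
        add_le_add (mul_le_mul_of_nonneg_right lead hconc) <| Finset.sum_nonpos fun i _ =>
          mul_nonpos_of_nonpos_of_nonneg (pair i) (hl _)
    _ = ‖D‖ * concurrence l := add_zero _

lemma norm_mul_tailSum_zero_le (hO : IsComplexConformal O D) (hl : ∀ i, 0 ≤ l i)
    (hconc : 0 ≤ concurrence l) :
    ‖D‖ * tailSum 0 l ≤ tailSum 0 (O.map (‖·‖ ^ 2) *ᵥ l) := by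
  set c : Fin 4 → ℝ := fun i => tailSum 0 fun j => ‖O j i‖ ^ 2 with hc
  have pair (i : Fin 3) : ‖D‖ ≤ c 0 + c i.succ := by
    have := hO.transpose.norm_sq_add_norm_sq_add_norm_le_sum_rows (Fin.succ_ne_zero i).symm 0
    simp only [transpose_apply, Fin.sum_univ_four] at this
    simp only [hc, tailSum_zero]
    linarith
  have c_zero_nonneg : 0 ≤ c 0 := Finset.sum_nonneg fun i _ => sq_nonneg _
  calc ‖D‖ * tailSum 0 l = ∑ i : Fin 3, ‖D‖ * l i.succ := by
        simp [tailSum, Finset.mul_sum]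
    _ ≤ ∑ i : Fin 3, (c 0 + c i.succ) * l i.succ :=
        Finset.sum_le_sum fun i _ => mul_le_mul_of_nonneg_right (pair i) (hl _)
    _ ≤ c 0 * concurrence l + ∑ i : Fin 3, (c 0 + c i.succ) * l i.succ :=
        le_add_of_nonneg_left (mul_nonneg c_zero_nonneg hconc)
    _ = tailSum 0 (O.map (‖·‖ ^ 2) *ᵥ l) := by
        simp [hc, concurrence_eq, tailSum_zero, mulVec, dotProduct, Fin.sum_univ_succ]
        ring

lemma norm_mul_tailSum_one_le (hO : IsComplexConformal O D) (hl : ∀ i, 0 ≤ l i)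
    (hord : IsOrdered l) :
    ‖D‖ * tailSum 1 l ≤ tailSum 1 (O.map (‖·‖ ^ 2) *ᵥ l) := by
  obtain ⟨h10, h21, h32⟩ := hord
  set r : Fin 4 → ℝ := fun i => ‖O 2 i‖ ^ 2 + ‖O 3 i‖ ^ 2 with hr
  have r_nonneg (i : Fin 4) : 0 ≤ r i := by positivity
  have all_columns : 2 * ‖D‖ ≤ r 0 + r 1 + r 2 + r 3 := by
    have row2 := hO.norm_le_sum_row 2
    have row3 := hO.norm_le_sum_row 3
    rw [Fin.sum_univ_four] at row2 row3
    simp only [hr]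
    linarith
  have three_columns : ‖D‖ ≤ r 0 + r 1 + r 2 := by
    have := hO.norm_sq_add_norm_sq_add_norm_le_sum_rows (show (2 : Fin 4) ≠ 3 by decide) 3
    rw [Fin.sum_univ_four] at this
    simp only [hr]
    linarith
  calc ‖D‖ * tailSum 1 l = l 3 * (2 * ‖D‖) + (l 2 - l 3) * ‖D‖ := by rw [tailSum_one]; ring
    _ ≤ l 3 * (r 0 + r 1 + r 2 + r 3) + (l 2 - l 3) * (r 0 + r 1 + r 2) :=
        add_le_add (mul_le_mul_of_nonneg_left all_columns (hl 3))
          (mul_le_mul_of_nonneg_left three_columns (sub_nonneg.2 h32))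
    _ = r 0 * l 2 + r 1 * l 2 + r 2 * l 2 + r 3 * l 3 := by ring
    _ ≤ r 0 * l 0 + r 1 * l 1 + r 2 * l 2 + r 3 * l 3 := by
        have := mul_le_mul_of_nonneg_left (h21.trans h10) (r_nonneg 0)
        have := mul_le_mul_of_nonneg_left h21 (r_nonneg 1)
        linarith
    _ = tailSum 1 (O.map (‖·‖ ^ 2) *ᵥ l) := by
        simp [hr, tailSum_one, mulVec, dotProduct, Fin.sum_univ_four]
        ring

lemma norm_mul_tailSum_two_le (hO : IsComplexConformal O D) (hl : ∀ i, 0 ≤ l i)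
    (hord : IsOrdered l) :
    ‖D‖ * tailSum 2 l ≤ tailSum 2 (O.map (‖·‖ ^ 2) *ᵥ l) := by
  obtain ⟨h10, h21, h32⟩ := hord
  have smallest (i : Fin 4) : l 3 ≤ l i := by fin_cases i <;> simp <;> linarith
  calc ‖D‖ * tailSum 2 l ≤ (∑ i, ‖O 3 i‖ ^ 2) * l 3 := by
        rw [tailSum_two]
        exact mul_le_mul_of_nonneg_right (hO.norm_le_sum_row 3) (hl 3)
    _ = ∑ i, ‖O 3 i‖ ^ 2 * l 3 := Finset.sum_mul ..
    _ ≤ ∑ i, ‖O 3 i‖ ^ 2 * l i :=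
        Finset.sum_le_sum fun i _ => mul_le_mul_of_nonneg_left (smallest i) (sq_nonneg _)
    _ = tailSum 2 (O.map (‖·‖ ^ 2) *ᵥ l) := by simp [tailSum_two, mulVec, dotProduct]

lemma monotonesLE_mulVec (hO : IsComplexConformal O D) (hl : ∀ i, 0 ≤ l i) (hord : IsOrdered l)
    (hconc : 0 ≤ concurrence l) : MonotonesLE (O.map (‖·‖ ^ 2) *ᵥ l) l := by
  intro k
  have tail_le : ‖D‖ * tailSum k l ≤ tailSum k (O.map (‖·‖ ^ 2) *ᵥ l) := by
    fin_cases k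
    · exact norm_mul_tailSum_zero_le hO hl hconc
    · exact norm_mul_tailSum_one_le hO hl hord
    · exact norm_mul_tailSum_two_le hO hl hord
  calc concurrence (O.map (‖·‖ ^ 2) *ᵥ l) * tailSum k l
      ≤ ‖D‖ * concurrence l * tailSum k l :=
        mul_le_mul_of_nonneg_right (concurrence_mulVec_le hO hl hconc)
          (Finset.sum_nonneg fun i _ => hl _)
    _ = concurrence l * (‖D‖ * tailSum k l) := by ring
    _ ≤ concurrence l * tailSum k (O.map (‖·‖ ^ 2) *ᵥ l) :=
        mul_le_mul_of_nonneg_left tail_le hconc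

end Conformal

/-! ### The cones of separable states and of SLOCC targets -/

section Kraus

variable {m n : Type*} [Fintype n]

/-- The completely positive map `X ↦ M X M†` with the single Kraus operator `M`, as an `ℝ`-linear
map. -/
def krausMap (M : Matrix m n ℂ) : Matrix n n ℂ →ₗ[ℝ] Matrix m m ℂ where
  toFun X := M * X * Mᴴ
  map_add' X Y := by rw [Matrix.mul_add, Matrix.add_mul]
  map_smul' r X := by simp

lemma krausMap_apply (M : Matrix m n ℂ) (X : Matrix n n ℂ) : krausMap M X = M * X * Mᴴ := rfl

lemma krausMap_krausMap {k : Type*} (M : Matrix k n ℂ) (N : Matrix n m ℂ) [Fintype m]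
    (X : Matrix m m ℂ) : krausMap M (krausMap N X) = krausMap (M * N) X := by
  simp only [krausMap_apply, conjTranspose_mul, Matrix.mul_assoc]

lemma krausMap_pureMat (M : Matrix m n ℂ) (x : n → ℂ) :
    krausMap M (pureMat x) = pureMat (M *ᵥ x) := by
  rw [krausMap_apply, pureMat, pureMat, mul_vecMulVec, vecMulVec_mul, star_mulVec]

lemma krausMap_smul_left (r : ℝ) (M : Matrix m n ℂ) (X : Matrix n n ℂ) :
    krausMap (r • M) X = r ^ 2 • krausMap M X := by
  simp [krausMap_apply, smul_smul, sq]

lemma pureMat_smul_s18 {d : Type*} (r : ℝ) (x : d → ℂ) : pureMat (r • x) = r ^ 2 • pureMat x := by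
  simp [pureMat, smul_vecMulVec, vecMulVec_smul, smul_smul, sq]

end Kraus

lemma krausMap_kronecker {m n m' n' : Type*} [Fintype n] [Fintype n'] (M : Matrix m n ℂ)
    (N : Matrix m' n' ℂ) (X : Matrix n n ℂ) (Y : Matrix n' n' ℂ) :
    krausMap (M ⊗ₖ N) (X ⊗ₖ Y) = krausMap M X ⊗ₖ krausMap N Y := by
  simp only [krausMap_apply, conjTranspose_kronecker, mul_kronecker_mul]

lemma krausMap_vecMulVec_single {m n : Type*} [Fintype n] [DecidableEq n] (x : m → ℂ) (i : n)
    (X : Matrix n n ℂ) :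
    krausMap (vecMulVec x (Pi.single i 1)) X = X i i • pureMat x := by
  ext a b
  simp [krausMap_apply, pureMat, vecMulVec_apply, mul_apply, Pi.single_apply]
  ring

lemma vecMulVec_single_kronecker {m n m' n' : Type*} [DecidableEq n] [DecidableEq n'] (x : m → ℂ)
    (y : m' → ℂ) (i : n) (j : n') :
    vecMulVec x (Pi.single i 1) ⊗ₖ vecMulVec y (Pi.single j 1) =
      vecMulVec (fun p : m × m' => x p.1 * y p.2) (Pi.single (i, j) 1) := by
  ext ⟨a, b⟩ ⟨c, d⟩
  by_cases hc : c = i <;> by_cases hd : d = j <;>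
    simp [vecMulVec_apply, hc, hd]

lemma pureMat_kronecker_pureMat {m m' : Type*} (x : m → ℂ) (y : m' → ℂ) :
    pureMat x ⊗ₖ pureMat y = pureMat fun p : m × m' => x p.1 * y p.2 := by
  ext ⟨a, b⟩ ⟨c, d⟩
  simp [pureMat, vecMulVec_apply]
  ring

lemma exists_diag_pos {n : Type*} [Fintype n] {X : Matrix n n ℂ} (hX : X.PosSemidef)
    (htrace : X.trace ≠ 0) : ∃ i, 0 < X i i := by
  obtain ⟨i, -, hi⟩ := Finset.exists_ne_zero_of_sum_ne_zero htrace
  exact ⟨i, hX.diag_nonneg.lt_of_ne' hi⟩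

lemma mem_hull_range_iff {α E : Type*} [AddCommMonoid E] [Module ℝ E] {g : α → E}
    (hg : ∀ r : ℝ, 0 ≤ r → ∀ a, ∃ b, r • g a = g b) {x : E} :
    x ∈ PointedCone.hull ℝ (Set.range g) ↔ ∃ (N : ℕ) (f : Fin N → α), x = ∑ k, g (f k) := by
  constructor
  · intro hx
    induction hx using Submodule.span_induction with
    | mem x hx =>
      obtain ⟨a, rfl⟩ := hx
      exact ⟨1, fun _ => a, by simp⟩
    | zero => exact ⟨0, Fin.elim0, by simp⟩
    | add x y _ _ hx hy =>
      obtain ⟨N, f, rfl⟩ := hx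
      obtain ⟨N', f', rfl⟩ := hy
      exact ⟨N + N', Fin.append f f', by simp [Fin.sum_univ_add]⟩
    | smul r x _ hx =>
      obtain ⟨N, f, rfl⟩ := hx
      choose scaled hscaled using hg r r.2
      refine ⟨N, fun k => scaled (f k), ?_⟩
      simp only [← hscaled, ← Finset.smul_sum]
      rfl
  · rintro ⟨N, f, rfl⟩
    exact Submodule.sum_mem _ fun k _ => PointedCone.subset_hull ⟨f k, rfl⟩

/-- The convex cone generated by the matrices `(A ⊗ B) ρ (A ⊗ B)†`, whose members are the
(unnormalized) states that `ρ` can be transformed to by SLOCC. -/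
def sloccCone (ρ : M4) : PointedCone ℝ M4 :=
  PointedCone.hull ℝ (Set.range fun AB : Matrix (Fin 2) (Fin 2) ℂ × Matrix (Fin 2) (Fin 2) ℂ =>
    krausMap (AB.1 ⊗ₖ AB.2) ρ)

/-- The convex cone of (unnormalized) separable two-qubit states. -/
def sepCone : PointedCone ℝ M4 :=
  PointedCone.hull ℝ (Set.range fun xy : (Fin 2 → ℂ) × (Fin 2 → ℂ) =>
    pureMat xy.1 ⊗ₖ pureMat xy.2)

section Cones

variable {ρ σ : M4}

lemma krausMap_mem_sloccCone (A B : Matrix (Fin 2) (Fin 2) ℂ) (ρ : M4) :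
    krausMap (A ⊗ₖ B) ρ ∈ sloccCone ρ :=
  PointedCone.subset_hull ⟨(A, B), rfl⟩

lemma kronecker_pureMat_mem_sepCone (x y : Fin 2 → ℂ) : pureMat x ⊗ₖ pureMat y ∈ sepCone :=
  PointedCone.subset_hull ⟨(x, y), rfl⟩

lemma sloccCone_le_iff {C : PointedCone ℝ M4} :
    sloccCone ρ ≤ C ↔ ∀ A B, krausMap (A ⊗ₖ B) ρ ∈ C := by
  rw [sloccCone, PointedCone.hull, Submodule.span_le, Set.range_subset_iff, Prod.forall]
  rfl

lemma sepCone_le_iff {C : PointedCone ℝ M4} :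
    sepCone ≤ C ↔ ∀ x y, pureMat x ⊗ₖ pureMat y ∈ C := by
  rw [sepCone, PointedCone.hull, Submodule.span_le, Set.range_subset_iff, Prod.forall]
  rfl

lemma sloccTo_iff_mem_sloccCone : SLOCCto ρ σ ↔ σ ∈ sloccCone ρ := by
  have scale (r : ℝ) (hr : 0 ≤ r) (AB : Matrix (Fin 2) (Fin 2) ℂ × Matrix (Fin 2) (Fin 2) ℂ) :
      ∃ AB' : Matrix (Fin 2) (Fin 2) ℂ × Matrix (Fin 2) (Fin 2) ℂ,
        r • krausMap (AB.1 ⊗ₖ AB.2) ρ = krausMap (AB'.1 ⊗ₖ AB'.2) ρ := by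
    refine ⟨(√r • AB.1, AB.2), ?_⟩
    rw [smul_kronecker, krausMap_smul_left, Real.sq_sqrt hr]
  constructor
  · rintro ⟨N, A, B, c, hc, rfl⟩
    rw [Complex.coe_smul]
    exact PointedCone.smul_mem _ hc.le
      (Submodule.sum_mem _ fun k _ => krausMap_mem_sloccCone (A k) (B k) ρ)
  · intro hσ
    obtain ⟨N, f, rfl⟩ := (mem_hull_range_iff scale).1 hσ
    exact ⟨N, fun k => (f k).1, fun k => (f k).2, 1, one_pos, by simp [krausMap_apply]⟩

lemma sep2_iff_mem_sepCone : Sep2 σ ↔ σ ∈ sepCone := by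
  have scale (r : ℝ) (hr : 0 ≤ r) (xy : (Fin 2 → ℂ) × (Fin 2 → ℂ)) :
      ∃ xy' : (Fin 2 → ℂ) × (Fin 2 → ℂ),
        r • (pureMat xy.1 ⊗ₖ pureMat xy.2) = pureMat xy'.1 ⊗ₖ pureMat xy'.2 := by
    refine ⟨(√r • xy.1, xy.2), ?_⟩
    rw [pureMat_smul_s18, smul_kronecker, Real.sq_sqrt hr]
  constructor
  · rintro ⟨N, x, y, rfl⟩
    exact Submodule.sum_mem _ fun k _ => kronecker_pureMat_mem_sepCone (x k) (y k)
  · intro hσ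
    obtain ⟨N, f, rfl⟩ := (mem_hull_range_iff scale).1 hσ
    exact ⟨N, fun k => (f k).1, fun k => (f k).2, rfl⟩

lemma sloccCone_le_of_le_comap {C : PointedCone ℝ M4}
    (hC : ∀ A B : Matrix (Fin 2) (Fin 2) ℂ, C ≤ C.comap (krausMap (A ⊗ₖ B))) (hσ : σ ∈ C) :
    sloccCone σ ≤ C :=
  sloccCone_le_iff.2 fun A B => hC A B hσ

lemma sloccCone_le_of_mem (h : σ ∈ sloccCone ρ) : sloccCone σ ≤ sloccCone ρ := by
  refine sloccCone_le_of_le_comap (fun A B => sloccCone_le_iff.2 fun A' B' => ?_) h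
  rw [PointedCone.mem_comap, krausMap_krausMap, ← mul_kronecker_mul]
  exact krausMap_mem_sloccCone _ _ _

lemma sloccCone_le_sepCone (h : σ ∈ sepCone) : sloccCone σ ≤ sepCone := by
  refine sloccCone_le_of_le_comap (fun A B => sepCone_le_iff.2 fun x y => ?_) h
  rw [PointedCone.mem_comap, krausMap_kronecker, krausMap_pureMat, krausMap_pureMat]
  exact kronecker_pureMat_mem_sepCone _ _

lemma sepCone_le_sloccCone (hρ : IsDensity ρ) : sepCone ≤ sloccCone ρ := by
  obtain ⟨p, hp⟩ := exists_diag_pos hρ.1 (by simp [hρ.2])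
  refine sepCone_le_iff.2 fun x y => ?_
  have prepare : krausMap (vecMulVec x (Pi.single p.1 1) ⊗ₖ vecMulVec y (Pi.single p.2 1)) ρ
      = ‖ρ p p‖ • (pureMat x ⊗ₖ pureMat y) := by
    rw [vecMulVec_single_kronecker, krausMap_vecMulVec_single, pureMat_kronecker_pureMat,
      ← Complex.coe_smul, ← Complex.eq_coe_norm_of_nonneg hp.le]
  rw [← inv_smul_smul₀ (norm_ne_zero_iff.2 hp.ne') (pureMat x ⊗ₖ pureMat y), ← prepare]
  exact PointedCone.smul_mem _ (inv_nonneg.2 (norm_nonneg _)) (krausMap_mem_sloccCone _ _ _)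

end Cones

/-! ### Local operators in the magic basis -/

/-- The phases that turn the Bell basis into the magic basis. -/
def magicPhase : Fin 4 → ℂ := ![1, I, I, 1]

/-- The unitary whose columns are the Bell states with the phases `1, i, i, 1`, i.e. the magic basis
of Hill and Wootters: the spin flip `|ψ⟩ ↦ σ_y ⊗ σ_y |ψ⟩*` acts on its coordinates, up to sign, by
complex conjugation. -/
def magicBasis : Matrix Q2 (Fin 4) ℂ := of fun p i => magicPhase i * bell i p

/-- The symplectic form `iσ_y` on `ℂ²`. -/
def spinFlip : Matrix (Fin 2) (Fin 2) ℂ := !![0, 1; -1, 0]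

/-- The local operator `A ⊗ B` written in the magic basis. -/
def magicMatrix (A B : Matrix (Fin 2) (Fin 2) ℂ) : Matrix (Fin 4) (Fin 4) ℂ :=
  magicBasisᴴ * (A ⊗ₖ B) * magicBasis

lemma invSqrt2_mul_self : invSqrt2 * invSqrt2 = 1 / 2 := by
  rw [invSqrt2, ← Complex.ofReal_mul, ← mul_inv, Real.mul_self_sqrt zero_le_two]
  norm_num

lemma conj_invSqrt2 : (starRingEnd ℂ) invSqrt2 = invSqrt2 := Complex.conj_ofReal _

lemma conjTranspose_magicBasis_mul_self : magicBasisᴴ * magicBasis = 1 := by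
  ext i j
  fin_cases i <;> fin_cases j <;>
    simp [magicBasis, magicPhase, bell, mul_apply, Fintype.sum_prod_type, conj_invSqrt2,
      invSqrt2_mul_self, mul_mul_mul_comm] <;> norm_num

lemma magicBasis_mul_conjTranspose : magicBasis * magicBasisᴴ = 1 :=
  (mul_eq_one_comm_of_card_eq _ _ _ (by simp)).1 conjTranspose_magicBasis_mul_self

lemma conj_magicBasis : magicBasis.map star = (spinFlip ⊗ₖ spinFlip) * magicBasis := by
  ext ⟨a, b⟩ i
  fin_cases a <;> fin_cases b <;> fin_cases i <;>
    simp [magicBasis, magicPhase, bell, spinFlip, mul_apply, Fintype.sum_prod_type, conj_invSqrt2]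

lemma spinFlip_mul_transpose_mul (A : Matrix (Fin 2) (Fin 2) ℂ) :
    spinFlipᴴ * Aᵀ * spinFlip = A.adjugate := by
  ext i j
  fin_cases i <;> fin_cases j <;>
    simp [spinFlip, adjugate_fin_two, mul_apply]

lemma magicMatrix_mul (A B A' B' : Matrix (Fin 2) (Fin 2) ℂ) :
    magicMatrix A B * magicMatrix A' B' = magicMatrix (A * A') (B * B') := by
  calc magicMatrix A B * magicMatrix A' B'
      = magicBasisᴴ * (A ⊗ₖ B) * (magicBasis * magicBasisᴴ) * (A' ⊗ₖ B') * magicBasis := by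
        simp only [magicMatrix, Matrix.mul_assoc]
    _ = magicMatrix (A * A') (B * B') := by
        rw [magicBasis_mul_conjTranspose, Matrix.mul_one, Matrix.mul_assoc magicBasisᴴ,
          ← mul_kronecker_mul, magicMatrix]

lemma magicMatrix_smul_one_smul_one (a b : ℂ) :
    magicMatrix (a • 1) (b • 1) = (a * b) • 1 := by
  rw [magicMatrix, smul_kronecker, kronecker_smul, smul_smul, one_kronecker_one,
    Matrix.mul_smul, Matrix.mul_one, Matrix.smul_mul, conjTranspose_magicBasis_mul_self]

lemma transpose_magicMatrix (A B : Matrix (Fin 2) (Fin 2) ℂ) :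
    (magicMatrix A B)ᵀ = magicMatrix A.adjugate B.adjugate := by
  have conj_eq : magicBasisᴴᵀ = (spinFlip ⊗ₖ spinFlip) * magicBasis := conj_magicBasis
  have transpose_eq : magicBasisᵀ = magicBasisᴴ * (spinFlipᴴ ⊗ₖ spinFlipᴴ) := by
    rw [← conjTranspose_kronecker, ← conjTranspose_mul, ← conj_magicBasis]
    ext
    simp
  rw [magicMatrix, transpose_mul, transpose_mul, conj_eq, transpose_eq, ← kroneckerMap_transpose,
    magicMatrix, ← spinFlip_mul_transpose_mul, ← spinFlip_mul_transpose_mul]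
  simp only [mul_kronecker_mul, Matrix.mul_assoc]

lemma isComplexConformal_magicMatrix (A B : Matrix (Fin 2) (Fin 2) ℂ) :
    IsComplexConformal (magicMatrix A B) (A.det * B.det) where
  mul_transpose := by
    rw [transpose_magicMatrix, magicMatrix_mul, mul_adjugate, mul_adjugate,
      magicMatrix_smul_one_smul_one]
  transpose_mul := by
    rw [transpose_magicMatrix, magicMatrix_mul, adjugate_mul, adjugate_mul,
      magicMatrix_smul_one_smul_one]

lemma krausMap_diagonal_apply {m n : Type*} [Fintype n] [DecidableEq n] (M : Matrix m n ℂ)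
    (d : n → ℂ) (j k : m) :
    krausMap M (diagonal d) j k = ∑ i, d i * (M j i * star (M k i)) := by
  rw [krausMap_apply, mul_apply]
  refine Finset.sum_congr rfl fun i _ => ?_
  rw [mul_diagonal, conjTranspose_apply]
  ring

lemma rhoBD_eq_krausMap (l : Fin 4 → ℝ) :
    rhoBD l = krausMap magicBasis (diagonal fun i => (l i : ℂ)) := by
  have phase (i : Fin 4) : magicPhase i * star (magicPhase i) = 1 := by
    fin_cases i <;> simp [magicPhase]
  ext p q
  rw [krausMap_diagonal_apply, rhoBD, Matrix.sum_apply]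
  refine Finset.sum_congr rfl fun i _ => ?_
  simp only [BellProj, magicBasis, Matrix.smul_apply, vecMulVec_apply, of_apply, Pi.star_apply,
    star_mul', smul_eq_mul]
  linear_combination -(l i : ℂ) * bell i p * star (bell i q) * phase i

/-- The weights `⟨Φᵢ|σ|Φᵢ⟩` of the Bell-diagonal part of `σ`. -/
def bellWeights : M4 →ₗ[ℝ] Fin 4 → ℝ where
  toFun σ i := ((krausMap magicBasisᴴ σ) i i).re
  map_add' σ τ := by ext; simp
  map_smul' r σ := by ext; simp

lemma bellWeights_krausMap_rhoBD (A B : Matrix (Fin 2) (Fin 2) ℂ) (l : Fin 4 → ℝ) :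
    bellWeights (krausMap (A ⊗ₖ B) (rhoBD l)) = (magicMatrix A B).map (‖·‖ ^ 2) *ᵥ l := by
  have diag_re (O : Matrix (Fin 4) (Fin 4) ℂ) (j : Fin 4) :
      (krausMap O (diagonal fun i => (l i : ℂ)) j j).re = (O.map (‖·‖ ^ 2) *ᵥ l) j := by
    rw [krausMap_diagonal_apply, re_sum, mulVec, dotProduct]
    refine Finset.sum_congr rfl fun i _ => ?_
    rw [RCLike.star_def, mul_conj, normSq_eq_norm_sq, ← ofReal_mul, ofReal_re, mul_comm]
    rfl
  ext j
  rw [← diag_re, magicMatrix, Matrix.mul_assoc, ← krausMap_krausMap, ← krausMap_krausMap,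
    ← rhoBD_eq_krausMap]
  rfl

lemma bellWeights_rhoBD (l : Fin 4 → ℝ) : bellWeights (rhoBD l) = l := by
  ext i
  change (krausMap magicBasisᴴ (rhoBD l) i i).re = l i
  rw [rhoBD_eq_krausMap, krausMap_krausMap, conjTranspose_magicBasis_mul_self]
  simp [krausMap_apply]

lemma monotonesLE_bellWeights {l : Fin 4 → ℝ} (hl : ∀ i, 0 ≤ l i) (hord : IsOrdered l)
    (hconc : 0 ≤ concurrence l) {σ : M4} (hσ : σ ∈ sloccCone (rhoBD l)) :
    MonotonesLE (bellWeights σ) l := by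
  induction hσ using Submodule.span_induction with
  | mem σ hσ =>
    obtain ⟨⟨A, B⟩, rfl⟩ := hσ
    rw [bellWeights_krausMap_rhoBD]
    exact monotonesLE_mulVec (isComplexConformal_magicMatrix A B) hl hord hconc
  | zero => intro k; simp [concurrence, tailSum]
  | add σ τ _ _ hσ hτ =>
    rw [map_add]
    exact hσ.add hτ
  | smul r σ _ hσ =>
    rw [show bellWeights (r • σ) = (r : ℝ) • bellWeights σ from map_smul bellWeights (r : ℝ) σ]
    exact hσ.smul r.2

lemma monotonesLE_of_rhoBD_mem_sloccCone {l l' : Fin 4 → ℝ} (hl : ∀ i, 0 ≤ l i)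
    (hord : IsOrdered l) (hconc : 0 ≤ concurrence l) (h : rhoBD l' ∈ sloccCone (rhoBD l)) :
    MonotonesLE l' l := by
  simpa only [bellWeights_rhoBD] using monotonesLE_bellWeights hl hord hconc h

/-! ### Bell-diagonal states reached by local permutations and separable mixtures -/

/-- The parametrization `l ↦ ρ_BD(l)` of the Bell-diagonal matrices as a linear map. -/
def rhoBDLinear : (Fin 4 → ℝ) →ₗ[ℝ] M4 where
  toFun := rhoBD
  map_add' l m := by simp [rhoBD, add_smul, Finset.sum_add_distrib]
  map_smul' r l := by simp [rhoBD, mul_smul, Finset.smul_sum]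

/-- The cone of weights `l` for which `ρ_BD(l)` lies in the cone `C` of matrices. -/
def bellCone (C : PointedCone ℝ M4) : PointedCone ℝ (Fin 4 → ℝ) := C.comap rhoBDLinear

lemma mem_bellCone {C : PointedCone ℝ M4} {l : Fin 4 → ℝ} : l ∈ bellCone C ↔ rhoBD l ∈ C := Iff.rfl

lemma krausMap_rhoBD_comp_perm {M : M4} {π : Equiv.Perm (Fin 4)} {κ : Fin 4 → ℂ}
    (hκ : ∀ i, κ i * star (κ i) = 1) (hM : ∀ i, M *ᵥ bell i = κ i • bell (π i)) (l : Fin 4 → ℝ) :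
    krausMap M (rhoBD (l ∘ π)) = rhoBD l := by
  have proj (i : Fin 4) : krausMap M (BellProj i) = BellProj (π i) := by
    rw [BellProj, ← pureMat, krausMap_pureMat, hM, pureMat, star_smul, smul_vecMulVec,
      vecMulVec_smul, smul_smul, hκ, one_smul, BellProj]
  simp only [rhoBD, coe_smul, map_sum, map_smul, proj, Function.comp_apply]
  exact Equiv.sum_comp π fun i => l i • BellProj i

lemma exists_kronecker_mulVec_bell_swap (k : Fin 3) :
    ∃ (A B : Matrix (Fin 2) (Fin 2) ℂ) (κ : Fin 4 → ℂ), (∀ i, κ i * star (κ i) = 1) ∧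
      ∀ i, (A ⊗ₖ B) *ᵥ bell i = κ i • bell (Equiv.swap k.castSucc k.succ i) := by
  let hadamard : Matrix (Fin 2) (Fin 2) ℂ := !![invSqrt2, invSqrt2; invSqrt2, -invSqrt2]
  fin_cases k
  · refine ⟨!![1, 0; 0, I], !![1, 0; 0, I], ![1, 1, I, I],
      fun i => by fin_cases i <;> simp, fun i => funext fun ⟨a, b⟩ => ?_⟩
    fin_cases i <;> fin_cases a <;> fin_cases b <;>
      simp [bell, mulVec, dotProduct, Fintype.sum_prod_type, Equiv.swap_apply_def]
  · refine ⟨hadamard, hadamard, ![1, 1, 1, -1],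
      fun i => by fin_cases i <;> simp, fun i => funext fun ⟨a, b⟩ => ?_⟩
    fin_cases i <;> fin_cases a <;> fin_cases b <;>
      simp [hadamard, bell, mulVec, dotProduct, Fintype.sum_prod_type, Equiv.swap_apply_def,
        invSqrt2_mul_self] <;> ring
  · refine ⟨!![1, 0; 0, I], !![1, 0; 0, -I], ![1, 1, -I, -I],
      fun i => by fin_cases i <;> simp, fun i => funext fun ⟨a, b⟩ => ?_⟩
    fin_cases i <;> fin_cases a <;> fin_cases b <;>
      simp [bell, mulVec, dotProduct, Fintype.sum_prod_type, Equiv.swap_apply_def]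

lemma rhoBD_mem_sloccCone_comp_perm (π : Equiv.Perm (Fin 4)) (l : Fin 4 → ℝ) :
    rhoBD l ∈ sloccCone (rhoBD (l ∘ π)) := by
  have hπ : π ∈ Submonoid.closure
      (Set.range fun k : Fin 3 => Equiv.swap k.castSucc k.succ) := by
    rw [Equiv.Perm.mclosure_swap_castSucc_succ]
    trivial
  induction hπ using Submonoid.closure_induction generalizing l with
  | mem π hπ =>
    obtain ⟨k, rfl⟩ := hπ
    obtain ⟨A, B, κ, hκ, hAB⟩ := exists_kronecker_mulVec_bell_swap k
    rw [← krausMap_rhoBD_comp_perm hκ hAB l]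
    exact krausMap_mem_sloccCone A B _
  | one => simpa [krausMap_apply] using krausMap_mem_sloccCone 1 1 (rhoBD l)
  | mul π π' _ _ hπ hπ' => exact sloccCone_le_of_mem (hπ' (l ∘ π)) (hπ l)

lemma rhoBD_comp_perm_mem_sloccCone (π : Equiv.Perm (Fin 4)) (l : Fin 4 → ℝ) :
    rhoBD (l ∘ π) ∈ sloccCone (rhoBD l) := by
  simpa [Function.comp_assoc] using rhoBD_mem_sloccCone_comp_perm π⁻¹ (l ∘ π)

lemma comp_perm_mem_bellCone_sloccCone {ρ : M4} {l : Fin 4 → ℝ} (π : Equiv.Perm (Fin 4))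
    (hl : l ∈ bellCone (sloccCone ρ)) : l ∘ π ∈ bellCone (sloccCone ρ) :=
  sloccCone_le_of_mem hl (rhoBD_comp_perm_mem_sloccCone π l)

lemma single_zero_add_single_one_mem_bellCone_sepCone :
    Pi.single 0 1 + Pi.single 1 1 ∈ bellCone sepCone := by
  have decomposition : rhoBD (Pi.single 0 1 + Pi.single 1 1)
      = ∑ i : Fin 2, pureMat (Pi.single i 1) ⊗ₖ pureMat (Pi.single i 1) := by
    ext ⟨a, b⟩ ⟨c, d⟩
    fin_cases a <;> fin_cases b <;> fin_cases c <;> fin_cases d <;>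
      simp [rhoBD, BellProj, bell, pureMat, vecMulVec_apply, Fin.sum_univ_succ, conj_invSqrt2,
        invSqrt2_mul_self] <;> norm_num
  rw [mem_bellCone, decomposition]
  exact Submodule.sum_mem _ fun i _ => kronecker_pureMat_mem_sepCone _ _

lemma single_add_single_mem_bellCone_sepCone {i j : Fin 4} (hij : i ≠ j) :
    Pi.single i 1 + Pi.single j 1 ∈ bellCone sepCone := by
  obtain ⟨π, rfl, rfl⟩ : ∃ π : Equiv.Perm (Fin 4), π 0 = i ∧ π 1 = j := by decide +revert
  have comp_eq : (Pi.single 0 1 + Pi.single 1 1 : Fin 4 → ℝ) ∘ ⇑π⁻¹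
      = Pi.single (π 0) 1 + Pi.single (π 1) 1 := by
    ext k
    simp [Pi.single_apply, Equiv.symm_apply_eq]
  rw [← comp_eq]
  exact sloccCone_le_sepCone single_zero_add_single_one_mem_bellCone_sepCone
    (rhoBD_comp_perm_mem_sloccCone _ _)

lemma rhoBD_mem_sepCone_of_concurrence_nonpos {l : Fin 4 → ℝ} (hl : ∀ i, 0 ≤ l i)
    (hord : IsOrdered l) (hconc : concurrence l ≤ 0) : rhoBD l ∈ sepCone := by
  obtain ⟨h10, h21, h32⟩ := hord
  rw [concurrence_eq] at hconc
  have pair {i j : Fin 4} (hij : i ≠ j) {r : ℝ} (hr : 0 ≤ r) :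
      r • (Pi.single i 1 + Pi.single j 1) ∈ bellCone sepCone :=
    PointedCone.smul_mem _ hr (single_add_single_mem_bellCone_sepCone hij)
  have decomposition : l =
      ((l 0 + l 1 - l 2 - l 3) / 2) • (Pi.single 0 1 + Pi.single 1 1)
      + ((l 0 + l 2 - l 1 - l 3) / 2) • (Pi.single 0 1 + Pi.single 2 1)
      + l 3 • (Pi.single 0 1 + Pi.single 3 1)
      + ((l 1 + l 2 + l 3 - l 0) / 2) • (Pi.single 1 1 + Pi.single 2 1) := by
    ext i
    fin_cases i <;> simp <;> ring
  rw [← mem_bellCone, decomposition]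
  refine add_mem (add_mem (add_mem ?_ ?_) ?_) ?_ <;> refine pair (by decide) ?_
  exacts [by linarith, by linarith, hl 3, by linarith]

/-- The weights with concurrence `K` and small weights `v`. -/
def weightsOfTail (K : ℝ) (v : Fin 3 → ℝ) : Fin 4 → ℝ := Fin.cons (K + ∑ i, v i) v

lemma weightsOfTail_concurrence_tail (l : Fin 4 → ℝ) :
    weightsOfTail (concurrence l) (Fin.tail l) = l := by
  ext i
  cases i using Fin.cases <;> simp [weightsOfTail, concurrence, Fin.tail]

lemma smul_weightsOfTail (r K : ℝ) (v : Fin 3 → ℝ) :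
    r • weightsOfTail K v = weightsOfTail (r * K) (r • v) := by
  ext i
  cases i using Fin.cases <;> simp [weightsOfTail, mul_add, Finset.mul_sum]

lemma weightsOfTail_add (K K' : ℝ) (v v' : Fin 3 → ℝ) :
    weightsOfTail (K + K') (v + v') = weightsOfTail K v + weightsOfTail K' v' := by
  ext i
  cases i using Fin.cases
  · simp [weightsOfTail, Finset.sum_add_distrib, add_add_add_comm]
  · simp [weightsOfTail]

lemma weightsOfTail_zero (u : Fin 3 → ℝ) :
    weightsOfTail 0 u = ∑ i, u i • (Pi.single 0 1 + Pi.single i.succ 1) := by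
  ext i
  cases i using Fin.cases <;> simp [weightsOfTail, Pi.single_apply]

lemma weightsOfTail_comp_perm (K : ℝ) (v : Fin 3 → ℝ) (π : Equiv.Perm (Fin 3)) :
    weightsOfTail K (v ∘ π) = weightsOfTail K v ∘ Equiv.Perm.decomposeFin.symm (0, π) := by
  ext i
  cases i using Fin.cases <;> simp [weightsOfTail, Equiv.sum_comp π v]

lemma weightsOfTail_mem_of_sum_Ici_le {C : PointedCone ℝ (Fin 4 → ℝ)}
    (hperm : ∀ π : Equiv.Perm (Fin 4), ∀ l ∈ C, l ∘ π ∈ C)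
    (hpair : ∀ i : Fin 3, Pi.single 0 1 + Pi.single i.succ 1 ∈ C) {K : ℝ} {w x : Fin 3 → ℝ}
    (hx : Antitone x) (hwx : ∀ k, ∑ i ∈ Finset.Ici k, w i ≤ ∑ i ∈ Finset.Ici k, x i)
    (hw : weightsOfTail K w ∈ C) : weightsOfTail K x ∈ C := by
  refine mem_of_sum_Ici_le (G := {v | weightsOfTail K v ∈ C}) ?_ ?_ ?_ hx hwx hw
  · intro v hv v' hv' a b ha hb hab
    rw [Set.mem_ofPred_eq, ← one_mul K, ← hab, add_mul, weightsOfTail_add, ← smul_weightsOfTail,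
      ← smul_weightsOfTail]
    exact add_mem (PointedCone.smul_mem _ ha hv) (PointedCone.smul_mem _ hb hv')
  · intro v v' hvv' hv
    rw [Set.mem_ofPred_eq, ← add_zero K, ← add_sub_cancel v v', weightsOfTail_add,
      weightsOfTail_zero]
    exact add_mem hv <| Submodule.sum_mem _ fun i _ =>
      PointedCone.smul_mem _ (sub_nonneg.2 (hvv' i)) (hpair i)
  · intro π v hv
    rw [Set.mem_ofPred_eq, weightsOfTail_comp_perm]
    exact hperm _ _ hv

lemma isDensity_rhoBD {l : Fin 4 → ℝ} (hl : IsWeight l) : IsDensity (rhoBD l) := by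
  rw [rhoBD_eq_krausMap, krausMap_apply]
  constructor
  · have diag_nonneg (i : Fin 4) : (0 : ℂ) ≤ l i := by exact_mod_cast hl.1 i
    exact (PosSemidef.diagonal diag_nonneg).mul_mul_conjTranspose_same _
  · rw [trace_mul_cycle, conjTranspose_magicBasis_mul_self, Matrix.one_mul, trace_diagonal]
    exact_mod_cast hl.2

lemma rhoBD_mem_sloccCone_of_monotonesLE {l l' : Fin 4 → ℝ} (hl : IsWeight l)
    (hord' : IsOrdered l') (hconc : 0 < concurrence l) (hconc' : 0 ≤ concurrence l')
    (h : MonotonesLE l' l) : rhoBD l' ∈ sloccCone (rhoBD l) := by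
  set c := concurrence l' / concurrence l with hc
  have scaled_mem :
      weightsOfTail (concurrence l') (c • Fin.tail l) ∈ bellCone (sloccCone (rhoBD l)) := by
    rw [← div_mul_cancel₀ (concurrence l') hconc.ne', ← smul_weightsOfTail,
      weightsOfTail_concurrence_tail]
    refine PointedCone.smul_mem _ (div_nonneg hconc' hconc.le) ?_
    exact rhoBD_comp_perm_mem_sloccCone 1 l
  have tails_le (k : Fin 3) :
      ∑ i ∈ Finset.Ici k, (c • Fin.tail l) i ≤ ∑ i ∈ Finset.Ici k, Fin.tail l' i := by
    have : c * tailSum k l ≤ tailSum k l' := by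
      rw [hc, div_mul_eq_mul_div, div_le_iff₀' hconc]
      exact h k
    simpa [tailSum, Finset.mul_sum, Fin.tail] using this
  have antitone_tail : Antitone (Fin.tail l') := by
    refine Fin.antitone_iff_succ_le.2 fun i => ?_
    fin_cases i
    exacts [hord'.2.1, hord'.2.2]
  rw [← mem_bellCone, ← weightsOfTail_concurrence_tail l']
  exact weightsOfTail_mem_of_sum_Ici_le (fun π m => comp_perm_mem_bellCone_sloccCone π)
    (fun i => sepCone_le_sloccCone (isDensity_rhoBD hl)
      (single_add_single_mem_bellCone_sepCone (Fin.succ_ne_zero i).symm))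
    antitone_tail tails_le scaled_mem

lemma concurrence_pos_of_notMem_sepCone {l : Fin 4 → ℝ} (hl : ∀ i, 0 ≤ l i) (hord : IsOrdered l)
    {σ : M4} (hσ : σ ∈ sloccCone (rhoBD l)) (hent : σ ∉ sepCone) : 0 < concurrence l := by
  by_contra! hconc
  exact hent (sloccCone_le_sepCone (rhoBD_mem_sepCone_of_concurrence_nonpos hl hord hconc) hσ)

/-- let `λ, λ'` be ordered weight vectors such that `ρ` (resp. `ρ'`)
is SLOCC equivalent to `ρ_BD(λ)` (resp. `ρ_BD(λ')`) whenever it is entangled.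
Then `ρ` can be transformed to `ρ'` by SLOCC iff either `ρ'` is separable, or both
are entangled and the three monotone inequalities `E_i(λ) ≥ E_i(λ')` hold. -/
theorem stmt18 (ρ ρ' : M4) (hρ : IsDensity ρ) (hρ' : IsDensity ρ')
    (l l' : Fin 4 → ℝ) (hw : IsWeight l) (hw' : IsWeight l')
    (ho : IsOrdered l) (ho' : IsOrdered l')
    (hl : ¬ Sep2 ρ → SLOCCequiv ρ (rhoBD l))
    (hl' : ¬ Sep2 ρ' → SLOCCequiv ρ' (rhoBD l')) :
    SLOCCto ρ ρ' ↔
      (Sep2 ρ' ∨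
        (¬ Sep2 ρ ∧ ¬ Sep2 ρ' ∧
          l' 0 ≤ l 0 ∧
          (1 - 2 * l' 1) * (l 2 + l 3) ≤ (1 - 2 * l 1) * (l' 2 + l' 3) ∧
          (1 - 2 * l' 1 - 2 * l' 2) * l 3 ≤ (1 - 2 * l 1 - 2 * l 2) * l' 3)) := by
  rw [← monotonesLE_iff hw.2 hw'.2]
  simp only [sep2_iff_mem_sepCone, SLOCCequiv, sloccTo_iff_mem_sloccCone] at hl hl' ⊢
  constructor
  · intro h
    by_cases hs' : ρ' ∈ sepCone
    · exact Or.inl hs'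
    have hs : ρ ∉ sepCone := fun hs => hs' (sloccCone_le_sepCone hs h)
    have hconc := concurrence_pos_of_notMem_sepCone hw.1 ho (hl hs).2 hs
    have hBD : rhoBD l' ∈ sloccCone (rhoBD l) :=
      sloccCone_le_of_mem (sloccCone_le_of_mem (hl hs).2 h) (hl' hs').1
    exact Or.inr ⟨hs, hs', monotonesLE_of_rhoBD_mem_sloccCone hw.1 ho hconc.le hBD⟩
  · rintro (hs' | ⟨hs, hs', hmono⟩)
    · exact sepCone_le_sloccCone hρ hs'
    have hconc := concurrence_pos_of_notMem_sepCone hw.1 ho (hl hs).2 hs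
    have hconc' := concurrence_pos_of_notMem_sepCone hw'.1 ho' (hl' hs').2 hs'
    have hBD : rhoBD l' ∈ sloccCone (rhoBD l) :=
      rhoBD_mem_sloccCone_of_monotonesLE hw ho' hconc hconc'.le hmono
    exact sloccCone_le_of_mem (sloccCone_le_of_mem (hl hs).1 hBD) (hl' hs').2

end Paper
end
end
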